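/- arXiv:1409.3159 — 2 statements merged into one kernel-verified Lean document; each statement's English description precedes it below -/
import Mathlib

section
/- Let G be a connected graph. Then for each integer k ≥ 2, t_k ≥ (k/(k+1))·t_{k+1} + 1/(k+1). (Corollary 2) -/
open SimpleGraph

variable {V : Type*}

/-- A set of vertices is independent in `G`. -/
def IsIndSet (G : SimpleGraph V) (s : Set V) : Prop :=
  ∀ ⦃u⦄, u ∈ s → ∀ ⦃v⦄, v ∈ s → ¬ G.Adj u v

/-- The number of end-vertices (vertices of degree one) of a subgraph `H`. -/
noncomputable def endVertexCount {G : SimpleGraph V} (H : G.Subgraph) : ℕ :=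
  {v : V | v ∈ H.verts ∧ (H.neighborSet v).ncard = 1}.ncard

/-- `H` is a cycle; a single vertex and a single edge are regarded as
simple cycles of orders 1 and 2, respectively. -/
def IsCycleSubgraph {G : SimpleGraph V} (H : G.Subgraph) : Prop :=
  H.Connected ∧ (H.verts.ncard ≤ 2 ∨ ∀ v ∈ H.verts, (H.neighborSet v).ncard = 2)

/-- `H` is a `k`-ended tree in `G`: a tree with at most `k` end-vertices (leaves);
a cycle is regarded as a 1-ended tree. -/
def IsKEndedTree (G : SimpleGraph V) (k : ℕ) (H : G.Subgraph) : Prop :=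
  (H.coe.IsTree ∧ endVertexCount H ≤ k) ∨ (1 ≤ k ∧ IsCycleSubgraph H)

/-- `t k`: the order of a largest `k`-ended tree in `G`. -/
noncomputable def maxKEndedOrder (G : SimpleGraph V) (k : ℕ) : ℕ :=
  sSup {n | ∃ H : G.Subgraph, IsKEndedTree G k H ∧ H.verts.ncard = n}

/-- `σ m`: the minimum degree sum over independent sets of `m` vertices of `G`,
and `+∞` if the independence number of `G` is less than `m`. -/
noncomputable def minDegreeSum (G : SimpleGraph V) [Fintype V] [DecidableRel G.Adj]
    (m : ℕ) : ℕ∞ :=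
  ⨅ s ∈ {s : Finset V | s.card = m ∧ IsIndSet G ↑s}, (∑ v ∈ s, G.degree v : ℕ∞)

/-- A tree rooted at `r` has a parent map `p` and a depth function `d`. -/
lemma SimpleGraph.IsTree.exists_parent {W : Type*} {T : SimpleGraph W} (hT : T.IsTree) (r : W) :
    ∃ (p : W → W) (d : W → ℕ), p r = r ∧
      (∀ x, x ≠ r → T.Adj x (p x) ∧ d x = d (p x) + 1) ∧
      ∀ x y, T.Adj x y → p x = y ∨ p y = x := by
  choose P hP hPu using fun x => hT.existsUnique_path x r
  refine ⟨fun x => (P x).snd, fun x => (P x).length, ?_, fun x hx => ?_, fun x y hxy => ?_⟩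
  · dsimp only
    rw [← hPu r .nil .nil]
    rfl
  · have hn : ¬ (P x).Nil := Walk.not_nil_of_ne hx
    refine ⟨(P x).adj_snd hn, ?_⟩
    dsimp only
    rw [← hPu _ _ (hP x).tail, Walk.length_tail_add_one hn]
  · by_cases h : x ∈ (P y).support
    · exact .inr (hT.isAcyclic.eq_snd_of_adj_start (hP y) hxy.symm h).symm
    · left
      dsimp only
      rw [← hPu x (.cons hxy (P y)) ((hP y).cons h)]
      simp

/-- Every vertex of a finite rooted tree has a leaf among its descendants. -/
lemma exists_leaf_descendant {W : Type*} [Finite W] [Nontrivial W] {T : SimpleGraph W}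
    (hT : T.Connected) {r : W} {p : W → W} {d : W → ℕ} (hr : p r = r)
    (hp : ∀ x, x ≠ r → T.Adj x (p x) ∧ d x = d (p x) + 1)
    (hadj : ∀ x y, T.Adj x y → p x = y ∨ p y = x) (x : W) :
    ∃ w, (T.neighborSet w).ncard = 1 ∧ ∃ j, p^[j] w = x := by
  obtain ⟨M, hM⟩ := (Set.finite_range d).bddAbove
  induction hn : M - d x using Nat.strong_induction_on generalizing x with
  | _ n ih =>
    by_cases hx : (T.neighborSet x).ncard = 1
    · exact ⟨x, hx, 0, rfl⟩
    obtain ⟨y, hxy, hy⟩ : ∃ y, T.Adj x y ∧ y ≠ p x := by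
      by_contra! h
      obtain ⟨y, hy⟩ := hT.preconnected.exists_adj_of_nontrivial x
      refine hx (Set.ncard_eq_one.2 ⟨p x, Set.eq_singleton_iff_unique_mem.2 ⟨?_, h⟩⟩)
      exact h y hy ▸ hy
    have hyx : p y = x := (hadj x y hxy).resolve_left hy.symm
    have hyr : y ≠ r := fun h => hxy.ne (by rw [← hyx, h, hr])
    have hd := (hp y hyr).2
    have hMy := hM ⟨y, rfl⟩
    rw [hyx] at hd
    obtain ⟨w, hw, j, hj⟩ := ih (M - d y) (by omega) y rfl
    exact ⟨w, hw, j + 1, by rw [Function.iterate_succ_apply', hj, hyx]⟩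

/-- A finite tree with at least three leaves has a vertex of degree at least three. -/
lemma SimpleGraph.IsTree.exists_three_le_ncard_neighborSet {W : Type*} [Finite W]
    {T : SimpleGraph W} (hT : T.IsTree) (hL : 3 ≤ {v | (T.neighborSet v).ncard = 1}.ncard) :
    ∃ r, 3 ≤ (T.neighborSet r).ncard := by
  classical
  have := Fintype.ofFinite W
  have hdeg : ∀ v, (T.neighborSet v).ncard = T.degree v := fun v => by
    rw [Set.ncard_eq_toFinset_card', ← T.card_neighborFinset_eq_degree]
    rfl
  simp only [hdeg] at hL ⊢
  by_contra! h
  have : Nontrivial W := by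
    obtain ⟨a, b, -, -, hab⟩ := (Set.one_lt_ncard_iff (Set.toFinite _)).1 (Nat.lt_of_succ_lt hL)
    exact ⟨a, b, hab⟩
  have hsum : ∑ v : W, (T.degree v + if T.degree v = 1 then 1 else 0) = ∑ _v : W, 2 := by
    refine Finset.sum_congr rfl fun v _ => ?_
    have := hT.connected.preconnected.degree_pos_of_nontrivial v
    have := h v
    split_ifs <;> omega
  rw [Finset.sum_add_distrib, T.sum_degrees_eq_twice_card_edges, ← Finset.card_filter] at hsum
  rw [Set.ncard_eq_toFinset_card', Set.toFinset_ofPred] at hL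
  have := hT.card_edgeFinset
  simp only [Finset.sum_const, Finset.card_univ, smul_eq_mul] at hsum
  omega

/-- A finite tree with `ℓ ≥ 3` leaves contains a subtree with fewer leaves that misses at most
`(n - 1) / ℓ` of its `n` vertices. -/
lemma SimpleGraph.IsTree.exists_subtree_fewer_leaves {W : Type*} [Finite W] {T : SimpleGraph W}
    (hT : T.IsTree) (hL : 3 ≤ {v | (T.neighborSet v).ncard = 1}.ncard) :
    ∃ S : Set W, (T.induce S).IsTree ∧
      {x | x ∈ S ∧ {y | y ∈ S ∧ T.Adj x y}.ncard = 1}.ncard <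
        {v | (T.neighborSet v).ncard = 1}.ncard ∧
      {v | (T.neighborSet v).ncard = 1}.ncard * Sᶜ.ncard + 1 ≤ Nat.card W := by
  classical
  obtain ⟨r, hr3⟩ := hT.exists_three_le_ncard_neighborSet hL
  have : Nontrivial W := by
    obtain ⟨a, b, -, -, hab⟩ := (Set.one_lt_ncard_iff (Set.toFinite _)).1 (Nat.lt_of_succ_lt hL)
    exact ⟨a, b, hab⟩
  obtain ⟨p, d, hr, hp, hadj⟩ := hT.exists_parent r
  have hleaf := exists_leaf_descendant hT.connected hr hp hadj
  set L : Set W := {v | (T.neighborSet v).ncard = 1}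
  have hrit : ∀ j, p^[j] r = r := fun j => Function.iterate_fixed hr j
  let S : W → Set W := fun v => {x | ∃ w ∈ L, w ≠ v ∧ ∃ j, p^[j] w = x}
  have hSp : ∀ v x, x ∈ S v → p x ∈ S v := by
    rintro v x ⟨w, hw, hwv, j, rfl⟩
    exact ⟨w, hw, hwv, j + 1, Function.iterate_succ_apply' ..⟩
  have hit : ∀ x, ∃ j, p^[j] x = r := fun x => by
    induction hn : d x generalizing x with
    | zero =>
      refine ⟨0, ?_⟩
      by_contra h
      have := (hp x h).2
      omega
    | succ n ih =>
      by_cases h : x = r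
      · exact ⟨0, h⟩
      have := (hp x h).2
      obtain ⟨j, hj⟩ := ih (p x) (by omega)
      exact ⟨j + 1, hj⟩
  have hrS : ∀ v, r ∈ S v := fun v => by
    obtain ⟨w, hw, hwv⟩ := Set.exists_ne_of_one_lt_ncard (show 1 < L.ncard by omega) v
    exact ⟨w, hw, hwv, hit w⟩
  have hconn : ∀ v, (T.induce (S v)).Connected := fun v => by
    have key : ∀ n x (hx : x ∈ S v), d x = n →
        (T.induce (S v)).Reachable ⟨x, hx⟩ ⟨r, hrS v⟩ := by
      intro n
      induction n using Nat.strong_induction_on with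
      | _ n ih =>
        intro x hx hn
        by_cases h : x = r
        · subst h; rfl
        have h2 := hp x h
        have hs : (T.induce (S v)).Adj ⟨x, hx⟩ ⟨p x, hSp v x hx⟩ := h2.1
        exact hs.reachable.trans (ih (d (p x)) (by omega) _ _ rfl)
    have : Nonempty (S v) := ⟨⟨r, hrS v⟩⟩
    exact ⟨fun x y => (key _ x x.2 rfl).trans (key _ y y.2 rfl).symm⟩
  have hroot : ∀ v, 1 < {y | y ∈ S v ∧ T.Adj r y}.ncard := fun v => by
    choose w hw j hj using hleaf
    have hinj : ∀ y z, T.Adj r y → T.Adj r z → w y = w z → y = z := by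
      have key : ∀ y z, T.Adj r y → T.Adj r z → w y = w z → j y < j z → False := by
        intro y z hy hz hyz hlt
        have hpy : p y = r := (hadj r y hy).resolve_left fun h => hy.ne (hr ▸ h)
        obtain ⟨m, hm⟩ := Nat.exists_eq_add_of_lt hlt
        apply hz.ne
        rw [← hj z, hm, ← hyz, show j y + m + 1 = m + (1 + j y) by omega,
          Function.iterate_add_apply, Function.iterate_add_apply, hj]
        simp [hpy, hrit]
      intro y z hy hz hyz
      rcases lt_trichotomy (j y) (j z) with h | h | h
      · exact (key y z hy hz hyz h).elim
      · rw [← hj y, ← hj z, h, hyz]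
      · exact (key z y hz hy hyz.symm h).elim
    have hsub : T.neighborSet r ⊆ {y | y ∈ S v ∧ T.Adj r y} ∪ {y | T.Adj r y ∧ w y = v} := by
      intro y hy
      by_cases h : w y = v
      · exact .inr ⟨hy, h⟩
      · exact .inl ⟨⟨w y, hw y, h, j y, hj y⟩, hy⟩
    have h1 : {y | T.Adj r y ∧ w y = v}.ncard ≤ 1 :=
      (Set.ncard_le_one_iff (Set.toFinite _)).2 fun {a b} ha hb => hinj a b ha.1 hb.1 (ha.2.trans hb.2.symm)
    have h2 := Set.ncard_le_ncard hsub
    have h3 := Set.ncard_union_le {y | y ∈ S v ∧ T.Adj r y} {y | T.Adj r y ∧ w y = v}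
    omega
  have hends : ∀ v, {x | x ∈ S v ∧ {y | y ∈ S v ∧ T.Adj x y}.ncard = 1} ⊆ L \ {v} := by
    rintro v x ⟨hx, h1⟩
    have hxr : x ≠ r := by
      rintro rfl
      exact (hroot v).ne' h1
    obtain ⟨w, hw, hwv, j, hj⟩ := id hx
    rcases j with _ | j
    · exact hj ▸ ⟨hw, hwv⟩
    rw [Function.iterate_succ_apply'] at hj
    have hyr : p^[j] w ≠ r := fun h => hxr (by rw [← hj, h, hr])
    have hy := hp _ hyr
    have hx2 := hp x hxr
    rw [hj] at hy
    have heq : p^[j] w = p x := (Set.ncard_le_one_iff (Set.toFinite _)).1 h1.le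
      ⟨⟨w, hw, hwv, j, rfl⟩, hy.1.symm⟩ ⟨hSp v x hx, hx2.1⟩
    rw [heq] at hy
    omega
  -- The complements of the sets `S v` are pairwise disjoint and avoid `r`.
  have hdisj : ∀ x u v, x ∉ S u → x ∉ S v → u = v := by
    intro x u v hu hv
    obtain ⟨w, hw, hj⟩ := hleaf x
    have h1 : w = u := by_contra fun h => hu ⟨w, hw, h, hj⟩
    have h2 : w = v := by_contra fun h => hv ⟨w, hw, h, hj⟩
    exact h1.symm.trans h2
  have := Fintype.ofFinite W
  have hcount : ∑ v ∈ L.toFinset, (S v)ᶜ.toFinset.card + 1 ≤ Fintype.card W := by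
    rw [← Finset.card_biUnion fun u _ v _ huv => Finset.disjoint_left.2 fun x hx hy =>
      huv (hdisj x u v (by simpa using hx) (by simpa using hy))]
    refine Finset.card_lt_univ_of_notMem (x := r) ?_
    simp only [Finset.mem_biUnion, Set.mem_toFinset, Set.mem_compl_iff, not_exists, not_and,
      not_not]
    exact fun v _ => hrS v
  have hLne : L.toFinset.Nonempty := by
    rw [← Finset.card_pos, ← Set.ncard_eq_toFinset_card']
    omega
  obtain ⟨v, hv, hmin⟩ := L.toFinset.exists_min_image (fun v => (S v)ᶜ.toFinset.card) hLne
  refine ⟨S v, ⟨hconn v, hT.isAcyclic.induce _⟩, ?_, ?_⟩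
  · refine (Set.ncard_le_ncard (hends v)).trans_lt ?_
    exact Set.ncard_sdiff_singleton_lt_of_mem (by simpa using hv)
  · have := Finset.card_nsmul_le_sum _ _ _ hmin
    rw [Set.ncard_eq_toFinset_card', Set.ncard_eq_toFinset_card', Nat.card_eq_fintype_card]
    rw [smul_eq_mul] at this
    omega

lemma ncard_verts_le_maxKEndedOrder [Finite V] {G : SimpleGraph V} {k : ℕ} {H : G.Subgraph}
    (hH : IsKEndedTree G k H) : H.verts.ncard ≤ maxKEndedOrder G k := by
  refine le_csSup ⟨Nat.card V, ?_⟩ ⟨H, hH, rfl⟩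
  rintro _ ⟨K, -, rfl⟩
  exact Set.ncard_le_card _

lemma isKEndedTree_singletonSubgraph {G : SimpleGraph V} {k : ℕ} (hk : 1 ≤ k) (v : V) :
    IsKEndedTree G k (G.singletonSubgraph v) :=
  .inr ⟨hk, Subgraph.singletonSubgraph_connected, .inl (by simp)⟩

lemma exists_isKEndedTree_ncard_eq [Finite V] [Nonempty V] (G : SimpleGraph V) {k : ℕ}
    (hk : 1 ≤ k) : ∃ H : G.Subgraph, IsKEndedTree G k H ∧ H.verts.ncard = maxKEndedOrder G k := by
  refine Nat.sSup_mem (s := {n | ∃ H : G.Subgraph, IsKEndedTree G k H ∧ H.verts.ncard = n})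
    ⟨_, _, isKEndedTree_singletonSubgraph hk (Classical.arbitrary V), rfl⟩ ⟨Nat.card V, ?_⟩
  rintro _ ⟨K, -, rfl⟩
  exact Set.ncard_le_card _

lemma endVertexCount_eq_ncard_coe {G : SimpleGraph V} (H : G.Subgraph) :
    endVertexCount H = {v | (H.coe.neighborSet v).ncard = 1}.ncard := by
  rw [← Set.ncard_image_of_injective _ Subtype.val_injective, endVertexCount]
  congr 1
  ext v
  have key : ∀ hv : v ∈ H.verts,
      (H.neighborSet v).ncard = (H.coe.neighborSet ⟨v, hv⟩).ncard := fun hv => by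
    rw [← Set.ncard_image_of_injective _ Subtype.val_injective]
    congr 1
    ext w
    simpa using fun h : H.Adj v w => h.snd_mem
  simp only [Set.mem_ofPred_eq, Set.mem_image, Subtype.exists, exists_and_right, exists_eq_right]
  exact ⟨fun ⟨hv, h⟩ => ⟨hv, key hv ▸ h⟩, fun ⟨hv, h⟩ => ⟨hv, key hv ▸ h⟩⟩

lemma endVertexCount_induce_image {G : SimpleGraph V} (H : G.Subgraph) (S : Set H.verts) :
    endVertexCount (H.induce (Subtype.val '' S)) =
      {x | x ∈ S ∧ {y | y ∈ S ∧ H.coe.Adj x y}.ncard = 1}.ncard := by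
  rw [← Set.ncard_image_of_injective _ Subtype.val_injective, endVertexCount]
  have key : ∀ x ∈ S, ((H.induce (Subtype.val '' S)).neighborSet x).ncard =
      {y | y ∈ S ∧ H.coe.Adj x y}.ncard := fun x hx => by
    rw [← Set.ncard_image_of_injective _ Subtype.val_injective]
    congr 1
    ext w
    simp [hx]
  congr 1
  ext v
  constructor
  · rintro ⟨⟨x, hx, rfl⟩, h⟩
    exact ⟨x, ⟨hx, key x hx ▸ h⟩, rfl⟩
  · rintro ⟨x, ⟨hx, h⟩, rfl⟩
    exact ⟨⟨x, hx, rfl⟩, (key x hx).trans h⟩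

lemma mul_maxKEndedOrder_succ_add_one_le [Finite V] [Nonempty V] (G : SimpleGraph V) {k : ℕ}
    (hk : 2 ≤ k) : k * maxKEndedOrder G (k + 1) + 1 ≤ (k + 1) * maxKEndedOrder G k := by
  obtain ⟨H, hH, hcard⟩ := exists_isKEndedTree_ncard_eq G (show 1 ≤ k + 1 by omega)
  have hpos : 1 ≤ maxKEndedOrder G k := by
    simpa using ncard_verts_le_maxKEndedOrder
      (isKEndedTree_singletonSubgraph (G := G) (show 1 ≤ k by omega) (Classical.arbitrary V))
  by_cases hHk : IsKEndedTree G k H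
  · have := ncard_verts_le_maxKEndedOrder hHk
    rw [hcard] at this
    nlinarith
  obtain ⟨hT, hle⟩ : H.coe.IsTree ∧ endVertexCount H ≤ k + 1 :=
    hH.resolve_right fun h => hHk (.inr ⟨by omega, h.2⟩)
  have hend : endVertexCount H = k + 1 :=
    le_antisymm hle (Nat.lt_of_not_le fun h => hHk (.inl ⟨hT, h⟩))
  rw [endVertexCount_eq_ncard_coe] at hend
  obtain ⟨S, hS, hSend, hScard⟩ := hT.exists_subtree_fewer_leaves (by omega)
  rw [hend] at hSend hScard
  have hK : IsKEndedTree G k (H.induce (Subtype.val '' S)) := by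
    refine .inl ⟨?_, by rw [endVertexCount_induce_image]; omega⟩
    rw [(Subgraph.coeInduceIso (G' := H) (Subtype.val '' S) (by simp)).isTree_iff]
    convert hS using 2 <;> simp
  have hle := ncard_verts_le_maxKEndedOrder hK
  rw [Subgraph.induce_verts, Set.ncard_image_of_injective _ Subtype.val_injective] at hle
  have hcompl := Set.ncard_add_ncard_compl S
  rw [Nat.card_coe_set_eq, hcard] at hcompl hScard
  nlinarith

/-- **Corollary 2.** If `G` is connected and `k ≥ 2`, then
`t_k ≥ (k/(k+1)) t_{k+1} + 1/(k+1)`. -/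
theorem corollary2 [Fintype V] (G : SimpleGraph V) (hG : G.Connected)
    (k : ℕ) (hk : 2 ≤ k) :
    ((k : ℚ) / (k + 1)) * maxKEndedOrder G (k + 1) + 1 / (k + 1) ≤
      (maxKEndedOrder G k : ℚ) := by
  have := hG.nonempty
  have h : (k * maxKEndedOrder G (k + 1) + 1 : ℚ) ≤ (k + 1) * maxKEndedOrder G k := by
    exact_mod_cast mul_maxKEndedOrder_succ_add_one_le G hk
  rw [div_mul_eq_mul_div, ← add_div, div_le_iff₀ (by positivity)]
  linarith
end

section
/- Let G be a connected graph and let k, λ, m be positive integers with 2 ≤ m ≤ min{k, λ} + 1. Then either t_{k+1} ≥ σ_m + λ(k − m + 1) + 1 or t_k ≥ t_{k+1} − λ + 1. (Theorem 2) -/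
open SimpleGraph

variable {V : Type*}

/-- The degree of `v` in `H`, as a cardinality of a set. -/
noncomputable def nbrCount (H : SimpleGraph V) (v : V) : ℕ := (H.neighborSet v).ncard

/-- The set of vertices of degree one. -/
def leafSet (H : SimpleGraph V) : Set V := {v | nbrCount H v = 1}

/-- `H` is (the edge set of) a subtree of `G` with vertex set `S`. -/
structure IsTreeOn (G H : SimpleGraph V) (S : Set V) : Prop where
  le : H ≤ G
  mem : ∀ ⦃a b⦄, H.Adj a b → a ∈ S
  nonempty : S.Nonempty
  reachable : ∀ ⦃a⦄, a ∈ S → ∀ ⦃b⦄, b ∈ S → H.Reachable a b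
  card_edge_lt : H.edgeSet.ncard + 1 ≤ S.ncard

/-- `p 0, …, p n` are the successive vertices of a path of `H`. -/
structure IsPathSeq (H : SimpleGraph V) (p : ℕ → V) (n : ℕ) : Prop where
  adj : ∀ i < n, H.Adj (p i) (p (i + 1))
  inj : ∀ i ≤ n, ∀ j ≤ n, p i = p j → i = j

section Degree

variable [Finite V] {H : SimpleGraph V} {a b c d v : V}

lemma one_le_nbrCount (h : H.Adj v a) : 1 ≤ nbrCount H v :=
  (Set.ncard_pos (Set.toFinite _)).2 ⟨a, h⟩

lemma two_le_nbrCount (ha : H.Adj v a) (hb : H.Adj v b) (hab : a ≠ b) : 2 ≤ nbrCount H v := by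
  rw [← Set.ncard_pair hab]
  exact Set.ncard_le_ncard (by rintro x (rfl | rfl) <;> assumption) (Set.toFinite _)

lemma eq_of_nbrCount_le_one (h : nbrCount H v ≤ 1) (ha : H.Adj v a) (hb : H.Adj v b) : a = b := by
  by_contra hab
  have := two_le_nbrCount ha hb hab
  omega

lemma eq_of_nbrCount_le_two (h : nbrCount H v ≤ 2) (ha : H.Adj v a) (hb : H.Adj v b)
    (hc : H.Adj v c) (hab : a ≠ b) (hac : a ≠ c) : b = c := by
  by_contra hbc
  have h3 : ({a, b, c} : Set V).ncard = 3 := Set.ncard_eq_three.2 ⟨a, b, c, hab, hac, hbc, rfl⟩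
  have : ({a, b, c} : Set V).ncard ≤ nbrCount H v :=
    Set.ncard_le_ncard (by rintro x (rfl | rfl | rfl) <;> assumption) (Set.toFinite _)
  omega

open Classical in
lemma nbrCount_sdiff_edge (h : H.Adj c d) (v : V) :
    nbrCount (H \ edge c d) v + (if v = c ∨ v = d then 1 else 0) = nbrCount H v := by
  have hne := h.ne
  unfold nbrCount
  by_cases hc : v = c
  · subst hc
    have : (H \ edge v d).neighborSet v = H.neighborSet v \ {d} := by
      ext w; simp [edge_adj]; grind [SimpleGraph.Adj.ne]
    rw [this, if_pos (Or.inl rfl)]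
    exact Set.ncard_sdiff_singleton_add_one h (Set.toFinite _)
  by_cases hd : v = d
  · subst hd
    have : (H \ edge c v).neighborSet v = H.neighborSet v \ {c} := by
      ext w; simp [edge_adj]; grind [SimpleGraph.Adj.ne]
    rw [this, if_pos (Or.inr rfl)]
    exact Set.ncard_sdiff_singleton_add_one h.symm (Set.toFinite _)
  · have : (H \ edge c d).neighborSet v = H.neighborSet v := by
      ext w; simp [edge_adj]; grind
    simp [this, hc, hd]

open Classical in
lemma nbrCount_sup_edge (hne : a ≠ b) (h : ¬ H.Adj a b) (v : V) :
    nbrCount (H ⊔ edge a b) v = nbrCount H v + (if v = a ∨ v = b then 1 else 0) := by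
  have hadj : (H ⊔ edge a b).Adj a b := by simp [edge_adj, hne]
  rw [← nbrCount_sdiff_edge hadj v]
  congr 2
  ext x y
  simp only [sdiff_adj, sup_adj, edge_adj]
  grind [SimpleGraph.Adj.symm]

lemma ncard_edgeSet_sdiff_edge (h : H.Adj c d) :
    (H \ edge c d).edgeSet.ncard + 1 = H.edgeSet.ncard := by
  have : (H \ edge c d).edgeSet = H.edgeSet \ {s(c, d)} := by
    rw [edgeSet_sdiff, edgeSet_edge_of_ne h.ne]
  rw [this]
  exact Set.ncard_sdiff_singleton_add_one h (Set.toFinite _)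

end Degree

lemma ncard_edgeSet_sup_edge_le (H : SimpleGraph V) (a b : V) :
    (H ⊔ edge a b).edgeSet.ncard ≤ H.edgeSet.ncard + 1 := by
  by_cases hab : a = b
  · subst hab; simp
  · rw [edgeSet_sup, edgeSet_edge_of_ne hab]
    exact (Set.ncard_union_le _ _).trans (by simp)

section PathSeq

variable {H : SimpleGraph V} {p q : ℕ → V} {n n' : ℕ}

lemma IsPathSeq.mono {H' : SimpleGraph V} (hp : IsPathSeq H p n) {s : ℕ} (hs : s ≤ n)
    (h : ∀ i < s, H'.Adj (p i) (p (i + 1))) : IsPathSeq H' p s :=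
  ⟨h, fun i hi j hj => hp.inj i (hi.trans hs) j (hj.trans hs)⟩

lemma IsPathSeq.drop (hp : IsPathSeq H p n) {a m : ℕ} (h : a + m ≤ n) :
    IsPathSeq H (fun i => p (a + i)) m :=
  ⟨fun i hi => hp.adj (a + i) (by omega),
    fun i hi j hj hij => by have := hp.inj _ (by omega) _ (by omega) hij; omega⟩

lemma IsPathSeq.reverse (hp : IsPathSeq H p n) {a m : ℕ} (ha : a ≤ n) (hm : m ≤ a) :
    IsPathSeq H (fun i => p (a - i)) m := by
  refine ⟨fun i hi => ?_, fun i hi j hj hij => ?_⟩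
  · have := hp.adj (a - (i + 1)) (by omega)
    rw [show a - (i + 1) + 1 = a - i by omega] at this
    exact this.symm
  · have := hp.inj _ (by omega) _ (by omega) hij; omega

lemma IsPathSeq.two_le_nbrCount [Finite V] (hp : IsPathSeq H p n) {i : ℕ} (h0 : 0 < i)
    (hi : i < n) : 2 ≤ nbrCount H (p i) := by
  obtain ⟨j, rfl⟩ : ∃ j, i = j + 1 := ⟨i - 1, by omega⟩
  refine _root_.two_le_nbrCount (hp.adj j (by omega)).symm (hp.adj (j + 1) hi) fun h => ?_
  have := hp.inj _ (by omega) _ (by omega) h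
  omega

/-- Two paths with the same first edge agree as long as they run through vertices of degree at
most two. -/
lemma IsPathSeq.eq_of_nbrCount_le_two [Finite V] (hp : IsPathSeq H p n) (hq : IsPathSeq H q n')
    (h0 : p 0 = q 0) (h1 : p 1 = q 1) {s : ℕ} (hn : s ≤ n) (hn' : s ≤ n')
    (hd : ∀ i, 0 < i → i < s → nbrCount H (p i) ≤ 2) : ∀ i ≤ s, p i = q i := by
  intro i
  induction i using Nat.strong_induction_on with
  | _ i ih =>
    intro hi
    match i with
    | 0 => exact h0
    | 1 => exact h1
    | j + 2 =>
      have e0 := ih j (by omega) (by omega)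
      have e1 := ih (j + 1) (by omega) (by omega)
      refine _root_.eq_of_nbrCount_le_two (hd (j + 1) (by omega) (by omega))
        (hp.adj j (by omega)).symm (hp.adj (j + 1) (by omega)) ?_ ?_ ?_
      · rw [e1]; exact hq.adj (j + 1) (by omega)
      · intro h; have := hp.inj _ (by omega) _ (by omega) h; omega
      · rw [e0]; intro h; have := hq.inj _ (by omega) _ (by omega) h; omega

lemma IsPathSeq.eq_of_edge_eq {r t : ℕ} (hp : IsPathSeq H p n) (hr : r < n)
    (ht : t < n) (he : s(p r, p (r + 1)) = s(p t, p (t + 1))) : r = t := by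
  rcases Sym2.eq_iff.1 he with ⟨h0, -⟩ | ⟨h0, h1⟩
  · exact hp.inj _ (by omega) _ (by omega) h0
  · have := hp.inj _ (by omega) _ (by omega) h0
    have := hp.inj _ (by omega) _ (by omega) h1
    omega

end PathSeq

lemma exists_isPathSeq_of_reachable {H : SimpleGraph V} {u x : V} (h : H.Reachable u x) :
    ∃ p : ℕ → V, IsPathSeq H p (H.dist u x) ∧ p 0 = u ∧ p (H.dist u x) = x ∧
      ∀ i ≤ H.dist u x, H.dist (p i) x = H.dist u x - i := by
  obtain ⟨w, hw, hl⟩ := h.exists_path_of_dist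
  refine ⟨w.getVert, ⟨fun i hi => w.adj_getVert_succ (by omega),
    fun i hi j hj hij => hw.getVert_injOn (by simpa [hl] using hi) (by simpa [hl] using hj) hij⟩,
    w.getVert_zero, by rw [← hl]; exact w.getVert_length, fun i hi => ?_⟩
  have h1 : H.dist (w.getVert i) x ≤ (w.drop i).length := dist_le _
  rw [Walk.drop_length] at h1
  obtain ⟨w', hw'⟩ := (w.drop i).reachable.exists_walk_length_eq_dist
  have h2 := dist_le ((w.take i).append w')
  rw [Walk.length_append, Walk.take_length] at h2
  omega

section Surgery

variable {G H : SimpleGraph V} {S : Set V} {p : ℕ → V} {n : ℕ}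

lemma IsTreeOn.mem_right (h : IsTreeOn G H S) {a b : V} (hab : H.Adj a b) : b ∈ S :=
  h.mem hab.symm

variable [Finite V]

lemma IsTreeOn.sup_edge (h : IsTreeOn G H S) {x u : V} (hx : x ∈ S) (hu : u ∉ S)
    (hxu : G.Adj x u) : IsTreeOn G (H ⊔ edge x u) (insert u S) := by
  have key : ∀ a ∈ insert u S, (H ⊔ edge x u).Reachable a x := by
    rintro a (rfl | ha)
    · exact Adj.reachable (by simp [edge_adj, hxu.ne'])
    · exact (h.reachable ha hx).mono le_sup_left
  refine ⟨?_, ?_, ⟨u, by simp⟩, fun a ha b hb => (key a ha).trans (key b hb).symm, ?_⟩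
  · exact sup_le h.le ((edge_le_iff _).2 (Or.inr hxu))
  · intro a b hab
    rw [sup_adj, edge_adj] at hab
    rcases hab with hab | ⟨⟨rfl, rfl⟩ | ⟨rfl, rfl⟩, -⟩
    · exact Or.inr (h.mem hab)
    · exact Or.inr hx
    · exact Or.inl rfl
  · rw [Set.ncard_insert_of_notMem hu]
    have := ncard_edgeSet_sup_edge_le H x u
    have := h.card_edge_lt
    omega

lemma IsTreeOn.sdiff_edge (h : IsTreeOn G H S) {x y : V} (hx : nbrCount H x = 1)
    (hxy : H.Adj x y) : IsTreeOn G (H \ edge x y) (S \ {x}) := by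
  have key : ∀ {a z : V}, H.Walk a z → z = y → a ≠ x → (H \ edge x y).Reachable a y := by
    intro a z w
    induction w with
    | nil => rintro rfl -; exact Reachable.rfl
    | @cons a b z hab w ih =>
      intro hz ha
      by_cases hb : b = x
      · subst hb
        rw [eq_of_nbrCount_le_one hx.le hab.symm hxy]
      · refine Reachable.trans (Adj.reachable ?_) (ih hz hb)
        simp only [sdiff_adj, edge_adj]
        grind
  have key' : ∀ a ∈ S \ {x}, (H \ edge x y).Reachable a y := fun a ha =>
    key (h.reachable ha.1 (h.mem_right hxy)).some rfl ha.2
  refine ⟨sdiff_le.trans h.le, ?_, ⟨y, h.mem_right hxy, hxy.ne'⟩,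
    fun a ha b hb => (key' a ha).trans (key' b hb).symm, ?_⟩
  · intro a b hab
    simp only [sdiff_adj, edge_adj] at hab
    refine ⟨h.mem hab.1, ?_⟩
    rintro rfl
    have := eq_of_nbrCount_le_one hx.le hab.1 hxy
    exact hab.2 ⟨Or.inl ⟨rfl, this⟩, hab.1.ne⟩
  · have h1 := ncard_edgeSet_sdiff_edge hxy
    have h2 := h.card_edge_lt
    have h3 := Set.ncard_sdiff_singleton_add_one (h.mem hxy) (Set.toFinite S)
    omega

/-- Cutting off a pendant path `p 0, …, p s` of positive length at its last vertex. -/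
lemma IsTreeOn.exists_prune (s : ℕ) : ∀ {H : SimpleGraph V} {S : Set V} {p : ℕ → V},
    IsTreeOn G H S → IsPathSeq H p (s + 1) → nbrCount H (p 0) = 1 →
    (∀ i, 0 < i → i ≤ s → nbrCount H (p i) = 2) →
    ∃ H' S', IsTreeOn G H' S' ∧ S'.ncard + (s + 1) = S.ncard ∧
      (∀ i ≤ s, nbrCount H' (p i) = 0) ∧
      nbrCount H' (p (s + 1)) + 1 = nbrCount H (p (s + 1)) ∧
      ∀ v, (∀ i ≤ s + 1, v ≠ p i) → nbrCount H' v = nbrCount H v := by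
  induction s with
  | zero =>
    intro H S p h hp h0 _
    have h01 := hp.adj 0 (by omega)
    have hd := fun v => nbrCount_sdiff_edge h01 v
    refine ⟨_, _, h.sdiff_edge h0 h01,
      Set.ncard_sdiff_singleton_add_one (h.mem h01) (Set.toFinite S), ?_, ?_, ?_⟩
    · intro i hi
      obtain rfl : i = 0 := by omega
      have := hd (p 0)
      simp only [true_or, if_true] at this
      omega
    · simpa using hd (p 1)
    · intro v hv
      simpa [hv 0, hv 1] using hd v
  | succ s ih =>
    intro H S p h hp h0 h2
    have h01 := hp.adj 0 (by omega)
    have hne : ∀ i, i ≤ s + 2 → 0 < i → p i ≠ p 0 := fun i hi hi0 e => by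
      have := hp.inj i hi 0 (by omega) e
      omega
    have hne1 : ∀ i, i ≤ s + 2 → 1 < i → p i ≠ p 1 := fun i hi hi0 e => by
      have := hp.inj i hi 1 (by omega) e
      omega
    have hd := fun v => nbrCount_sdiff_edge h01 v
    obtain ⟨H', S', hT, hc, hz, hs, ho⟩ := ih (p := fun i => p (i + 1)) (h.sdiff_edge h0 h01)
      ⟨fun i hi => by
        have := hp.adj (i + 1) (by omega)
        simp only [sdiff_adj, edge_adj]
        refine ⟨this, ?_⟩
        have := hne (i + 1) (by omega) (by omega)
        have := hne (i + 1 + 1) (by omega) (by omega)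
        tauto,
        fun i hi j hj hij => by have := hp.inj _ (by omega) _ (by omega) hij; omega⟩
      (by have := hd (p 1); have := h2 1 (by omega) (by omega); simp at *; omega)
      (fun i hi hi' => by
        have := hd (p (i + 1))
        rw [if_neg (by simp [hne (i + 1) (by omega) (by omega), hne1 (i + 1) (by omega) (by omega)])]
          at this
        rw [← h2 (i + 1) (by omega) (by omega)]
        simpa using this)
    refine ⟨H', S', hT, ?_, ?_, ?_, ?_⟩
    · have := Set.ncard_sdiff_singleton_add_one (h.mem h01) (Set.toFinite S)
      omega
    · intro i hi
      match i with
      | 0 =>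
        rw [ho _ (fun i hi => (hne (i + 1) (by omega) (by omega)).symm)]
        have := hd (p 0)
        simp only [true_or, if_true] at this
        omega
      | i + 1 => exact hz i (by omega)
    · have := hd (p (s + 2))
      rw [if_neg (by simp [hne (s + 2) (by omega) (by omega), hne1 (s + 2) (by omega) (by omega)])]
        at this
      simpa [← this] using hs
    · intro v hv
      rw [ho v (fun i hi => hv (i + 1) (by omega))]
      simpa [hv 0 (by omega), hv 1 (by omega)] using hd v

open Classical in
/-- If `p` is a path ending in a leaf `p n` which is adjacent in `G` to `p 0`, then the edge
`p t — p (t + 1)` may be exchanged for `p n — p 0`. -/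
lemma IsTreeOn.exchange (h : IsTreeOn G H S) (hp : IsPathSeq H p n) (hn : nbrCount H (p n) = 1)
    (hG : G.Adj (p n) (p 0)) {t : ℕ} (ht : t + 1 < n) :
    IsTreeOn G ((H \ edge (p t) (p (t + 1))) ⊔ edge (p n) (p 0)) S ∧
    (∀ i < n, i ≠ t →
      ((H \ edge (p t) (p (t + 1))) ⊔ edge (p n) (p 0)).Adj (p i) (p (i + 1))) ∧
    ∀ v, nbrCount ((H \ edge (p t) (p (t + 1))) ⊔ edge (p n) (p 0)) v +
        (if v = p t ∨ v = p (t + 1) then 1 else 0) =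
      nbrCount H v + (if v = p n ∨ v = p 0 then 1 else 0) := by
  have htt := hp.adj t (by omega)
  have hnadj : ¬ H.Adj (p n) (p 0) := by
    intro hadj
    obtain ⟨n, rfl⟩ : ∃ m, n = m + 1 := ⟨n - 1, by omega⟩
    have := eq_of_nbrCount_le_one hn.le hadj (hp.adj n (by omega)).symm
    have := hp.inj _ (by omega) _ (by omega) this
    omega
  set H' := (H \ edge (p t) (p (t + 1))) ⊔ edge (p n) (p 0) with hH'
  have hadj : ∀ i < n, i ≠ t → H'.Adj (p i) (p (i + 1)) := by
    intro i hi hit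
    refine Or.inl ?_
    simp only [sdiff_adj, edge_adj]
    refine ⟨hp.adj i hi, ?_⟩
    rintro ⟨⟨e, -⟩ | ⟨e1, e2⟩, -⟩
    · exact hit (hp.inj _ (by omega) _ (by omega) e)
    · have := hp.inj _ (by omega) _ (by omega) e1
      have := hp.inj _ (by omega) _ (by omega) e2
      omega
  have hback : ∀ i ≤ t, H'.Reachable (p 0) (p i) := by
    intro i
    induction i with
    | zero => intro; rfl
    | succ i ih =>
      exact fun hi => (ih (by omega)).trans (hadj i (by omega) (by omega)).reachable
  have hfwd : ∀ i, t + 1 + i ≤ n → H'.Reachable (p (t + 1)) (p (t + 1 + i)) := by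
    intro i
    induction i with
    | zero => intro; rfl
    | succ i ih =>
      exact fun hi => (ih (by omega)).trans (hadj (t + 1 + i) (by omega) (by omega)).reachable
  have hcl : H'.Reachable (p n) (p 0) := Adj.reachable (Or.inr (by simp [edge_adj, hG.ne]))
  have hcd : H'.Reachable (p t) (p (t + 1)) := by
    have := hfwd (n - (t + 1)) (by omega)
    rw [show t + 1 + (n - (t + 1)) = n by omega] at this
    exact (hback t le_rfl).symm.trans (hcl.symm.trans this.symm)
  have hreach : ∀ {a b : V}, H.Walk a b → H'.Reachable a b := by
    intro a b w
    induction w with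
    | nil => exact Reachable.rfl
    | @cons a b c hab w ih =>
      refine Reachable.trans ?_ ih
      by_cases he : (edge (p t) (p (t + 1))).Adj a b
      · rw [edge_adj] at he
        rcases he with ⟨⟨rfl, rfl⟩ | ⟨rfl, rfl⟩, -⟩
        · exact hcd
        · exact hcd.symm
      · exact Adj.reachable (Or.inl ⟨hab, he⟩)
  refine ⟨⟨?_, ?_, h.nonempty, fun a ha b hb => hreach (h.reachable ha hb).some, ?_⟩, hadj, ?_⟩
  · exact sup_le (sdiff_le.trans h.le) ((edge_le_iff _).2 (Or.inr hG))
  · intro a b hab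
    rw [hH', sup_adj, edge_adj] at hab
    rcases hab with hab | ⟨⟨rfl, rfl⟩ | ⟨rfl, rfl⟩, -⟩
    · exact h.mem hab.1
    · obtain ⟨n, rfl⟩ : ∃ m, n = m + 1 := ⟨n - 1, by omega⟩
      exact h.mem_right (hp.adj n (by omega))
    · exact h.mem (hp.adj 0 (by omega))
  · have h1 := ncard_edgeSet_sup_edge_le (H \ edge (p t) (p (t + 1))) (p n) (p 0)
    have h2 := ncard_edgeSet_sdiff_edge htt
    have h3 := h.card_edge_lt
    rw [← hH'] at h1
    omega
  · intro v
    have hnadj' : ¬ (H \ edge (p t) (p (t + 1))).Adj (p n) (p 0) := fun e => hnadj e.1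
    rw [hH', nbrCount_sup_edge hG.ne hnadj', ← nbrCount_sdiff_edge htt v]
    omega

/-- The combination of an edge exchange with the removal of the interior of the segment
`p 0, …, p (t + 1)`. -/
lemma IsTreeOn.exists_exchange_prune (h : IsTreeOn G H S) (hp : IsPathSeq H p n)
    (hn : nbrCount H (p n) = 1) (hG : G.Adj (p n) (p 0)) {t : ℕ} (ht : t + 1 < n)
    (h2 : ∀ i, 0 < i → i ≤ t → nbrCount H (p i) = 2) :
    ∃ H' S', IsTreeOn G H' S' ∧ S'.ncard + t = S.ncard ∧
      nbrCount H' (p n) = 2 ∧ nbrCount H' (p 0) = nbrCount H (p 0) ∧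
      (∀ i, 0 < i → i ≤ t → nbrCount H' (p i) = 0) ∧
      nbrCount H' (p (t + 1)) + 1 = nbrCount H (p (t + 1)) ∧
      ∀ v, (∀ i ≤ t + 1, v ≠ p i) → v ≠ p n → nbrCount H' v = nbrCount H v := by
  have hne : ∀ i ≤ n, ∀ j ≤ n, i ≠ j → p i ≠ p j := fun i hi j hj hij e => hij (hp.inj i hi j hj e)
  obtain ⟨hT, hadj, hd⟩ := h.exchange hp hn hG ht
  set H' := (H \ edge (p t) (p (t + 1))) ⊔ edge (p n) (p 0)
  have hdn : nbrCount H' (p n) = 2 := by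
    have := hd (p n)
    simpa [hne n (by omega) t (by omega) (by omega), hne n (by omega) (t + 1) (by omega) (by omega),
      hn] using this
  have hdt : nbrCount H' (p (t + 1)) + 1 = nbrCount H (p (t + 1)) := by
    have := hd (p (t + 1))
    simpa [hne (t + 1) (by omega) n (by omega) (by omega),
      hne (t + 1) (by omega) 0 (by omega) (by omega)] using this
  have hdo : ∀ v, (∀ i ≤ t + 1, v ≠ p i) → v ≠ p n → nbrCount H' v = nbrCount H v := by
    intro v hv hvn
    simpa [hv t (by omega), hv (t + 1) (by omega), hv 0 (by omega), hvn] using hd v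
  match t with
  | 0 =>
    refine ⟨H', S, hT, rfl, hdn, ?_, by omega, hdt, hdo⟩
    simpa using hd (p 0)
  | t + 1 =>
    have hd0 : nbrCount H' (p 0) = nbrCount H (p 0) + 1 := by
      simpa [hne 0 (by omega) (t + 1) (by omega) (by omega),
        hne 0 (by omega) (t + 1 + 1) (by omega) (by omega)] using hd (p 0)
    have hdi : ∀ i, 0 < i → i ≤ t → nbrCount H' (p i) = 2 := by
      intro i hi hit
      rw [← h2 i hi (by omega)]
      simpa [hne i (by omega) (t + 1) (by omega) (by omega),
        hne i (by omega) (t + 1 + 1) (by omega) (by omega),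
        hne i (by omega) n (by omega) (by omega),
        hne i (by omega) 0 (by omega) (by omega)] using hd (p i)
    have hdc : nbrCount H' (p (t + 1)) = 1 := by
      have := hd (p (t + 1))
      have h2' := h2 (t + 1) (by omega) (by omega)
      simp only [hne (t + 1) (by omega) n (by omega) (by omega),
        hne (t + 1) (by omega) 0 (by omega) (by omega), true_or, or_self, if_true, if_false]
        at this
      omega
    have hseq : IsPathSeq H' p (t + 1) := hp.mono (by omega) fun i hi => hadj i (by omega) (by omega)
    obtain ⟨H'', S'', hT', hc, hz, hs, ho⟩ := IsTreeOn.exists_prune t hT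
      (hseq.reverse (a := t + 1) le_rfl le_rfl) (by simpa using hdc)
      (fun i hi hit => hdi (t + 1 - i) (by omega) (by omega))
    simp only [Nat.sub_self] at hs
    refine ⟨H'', S'', hT', hc, ?_, by omega, ?_, ?_, ?_⟩
    · rw [ho _ (fun i hi => hne _ (by omega) _ (by omega) (by omega)), hdn]
    · intro i hi hit
      have := hz (t + 1 - i) (by omega)
      rwa [show t + 1 - (t + 1 - i) = i by omega] at this
    · rw [ho _ (fun i hi => hne _ (by omega) _ (by omega) (by omega)), hdt]
    · intro v hv hvn
      rw [ho v (fun i hi => hv _ (by omega)), hdo v hv hvn]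

end Surgery

section Subgraphs

variable {G H : SimpleGraph V} {S : Set V}

/-- The subgraph of `G` with vertex set `S` and the edges of `H`. -/
def subgraphOn (hle : H ≤ G) (hmem : ∀ ⦃a b⦄, H.Adj a b → a ∈ S) : G.Subgraph where
  verts := S
  Adj := H.Adj
  adj_sub h := hle h
  edge_vert h := hmem h
  symm := H.symm

lemma connected_subgraphOn (hle : H ≤ G) (hmem : ∀ ⦃a b⦄, H.Adj a b → a ∈ S)
    (hne : S.Nonempty) (hr : ∀ ⦃a⦄, a ∈ S → ∀ ⦃b⦄, b ∈ S → H.Reachable a b) :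
    (subgraphOn hle hmem).Connected := by
  rw [Subgraph.connected_iff, Subgraph.preconnected_iff]
  refine ⟨?_, hne⟩
  have key : ∀ {a b : V}, H.Walk a b → ∀ (ha : a ∈ S) (hb : b ∈ S),
      (subgraphOn hle hmem).coe.Reachable ⟨a, ha⟩ ⟨b, hb⟩ := by
    intro a b w
    induction w with
    | nil => intro _ _; exact Reachable.rfl
    | @cons a b c hab w ih =>
      intro ha hc
      have hb : b ∈ S := hmem hab.symm
      have : (subgraphOn hle hmem).coe.Adj ⟨a, ha⟩ ⟨b, hb⟩ := hab
      exact this.reachable.trans (ih hb hc)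
  rintro ⟨a, ha⟩ ⟨b, hb⟩
  exact key (hr ha hb).some ha hb

lemma natCard_coe_edgeSet (T : G.Subgraph) : Nat.card T.coe.edgeSet = T.edgeSet.ncard := by
  rw [← T.image_coe_edgeSet_coe, Set.ncard_image_of_injective _
    (Sym2.map.injective Subtype.val_injective), Set.ncard_def, Set.encard, ENat.card]
  rfl

lemma IsTreeOn.isTree_coe [Finite V] (h : IsTreeOn G H S) :
    (subgraphOn h.le h.mem).coe.IsTree := by
  have hc := (connected_subgraphOn h.le h.mem h.nonempty h.reachable).coe
  rw [isTree_iff_connected_and_card]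
  refine ⟨hc, le_antisymm ?_ hc.card_vert_le_card_edgeSet_add_one⟩
  rw [natCard_coe_edgeSet]
  exact h.card_edge_lt

lemma isTreeOn_spanningCoe [Finite V] {T : G.Subgraph} (h : T.coe.IsTree) :
    IsTreeOn G T.spanningCoe T.verts := by
  obtain ⟨hc, hcard⟩ := isTree_iff_connected_and_card.1 h
  refine ⟨T.spanningCoe_le, fun a b hab => T.edge_vert hab,
    Set.nonempty_coe_sort.1 hc.nonempty, fun a ha b hb => ?_, ?_⟩
  · exact (hc.preconnected ⟨a, ha⟩ ⟨b, hb⟩).map T.coeEmbeddingSpanningCoe.toHom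
  · rw [natCard_coe_edgeSet] at hcard
    rw [T.edgeSet_spanningCoe]
    exact hcard.le

end Subgraphs

section Extremal

variable [Finite V] {G H : SimpleGraph V} {S : Set V} {k l : ℕ}

lemma IsTreeOn.exists_eq_of_nbrCount_le_two {p : ℕ → V} {n : ℕ} (h : IsTreeOn G H S)
    (hp : IsPathSeq H p n) (hn : 0 < n) (h0 : nbrCount H (p 0) = 1) (h1 : nbrCount H (p n) = 1)
    (h2 : ∀ i, 0 < i → i < n → nbrCount H (p i) ≤ 2) : ∀ v ∈ S, ∃ i ≤ n, p i = v := by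
  have step : ∀ a b, H.Adj a b → (∃ i ≤ n, p i = a) → ∃ i ≤ n, p i = b := by
    rintro a b hab ⟨i, hi, rfl⟩
    obtain rfl | hi0 := Nat.eq_zero_or_pos i
    · exact ⟨1, hn, eq_of_nbrCount_le_one h0.le (hp.adj 0 hn) hab⟩
    obtain ⟨j, rfl⟩ : ∃ j, i = j + 1 := ⟨i - 1, by omega⟩
    have hj := (hp.adj j (by omega)).symm
    obtain rfl | hlt := hi.eq_or_lt
    · exact ⟨j, by omega, eq_of_nbrCount_le_one h1.le hj hab⟩
    by_cases hb : p j = b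
    · exact ⟨j, by omega, hb⟩
    refine ⟨j + 2, by omega, eq_of_nbrCount_le_two (h2 _ hi0 hlt) hj (hp.adj _ hlt) hab ?_ hb⟩
    intro e
    have := hp.inj _ (by omega) _ (by omega) e
    omega
  have key : ∀ {a b : V}, H.Walk a b → (∃ i ≤ n, p i = a) → ∃ i ≤ n, p i = b := by
    intro a b w
    induction w with
    | nil => exact id
    | cons hab w ih => exact fun ha => ih (step _ _ hab ha)
  intro v hv
  exact key (h.reachable (h.mem (hp.adj 0 hn)) hv).some ⟨0, by omega, rfl⟩

lemma IsTreeOn.mem_of_mem_leafSet (h : IsTreeOn G H S) {x : V} (hx : x ∈ leafSet H) : x ∈ S := by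
  obtain ⟨y, hy⟩ : (H.neighborSet x).Nonempty :=
    (Set.ncard_pos (Set.toFinite _)).1 (one_pos.trans_eq (Eq.symm hx))
  exact h.mem hy

/-- `H` is a tree on `S` with `k + 1` leaves, largest among the trees with at most `k + 1` leaves,
and exceeding the order of every `k`-ended tree by at least `l`. -/
structure IsExtremal (G : SimpleGraph V) (k l : ℕ) (H : SimpleGraph V) (S : Set V) : Prop where
  tree : IsTreeOn G H S
  ncard_leafSet : (leafSet H).ncard = k + 1
  one_le_l : 1 ≤ l
  le_of_leafSet : ∀ ⦃H' S'⦄, IsTreeOn G H' S' → (leafSet H').ncard ≤ k + 1 → S'.ncard ≤ S.ncard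
  add_le_of_leafSet : ∀ ⦃H' S'⦄, IsTreeOn G H' S' → (leafSet H').ncard ≤ k →
    S'.ncard + l ≤ S.ncard
  add_le_of_cycle : ∀ C : G.Subgraph, IsCycleSubgraph C → C.verts.ncard + l ≤ S.ncard

lemma IsExtremal.add_le_of_adj (hE : IsExtremal G k l H S) {H' : SimpleGraph V} {S' : Set V}
    (h : IsTreeOn G H' S') (hc : (leafSet H').ncard ≤ k + 1) {x y : V} (hx : x ∈ leafSet H')
    (hy : y ∈ leafSet H') (hxy : G.Adj x y) : S'.ncard + l ≤ S.ncard := by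
  have hreach := h.reachable (h.mem_of_mem_leafSet hy) (h.mem_of_mem_leafSet hx)
  obtain ⟨p, hp, hp0, hpn, -⟩ := exists_isPathSeq_of_reachable hreach
  have hn : 0 < H'.dist y x := hreach.pos_dist_of_ne hxy.ne'
  generalize H'.dist y x = n at *
  subst hp0 hpn
  have hne : ∀ i ≤ n, ∀ j ≤ n, i ≠ j → p i ≠ p j := fun i hi j hj hij e => hij (hp.inj i hi j hj e)
  by_cases hbr : ∃ i, 0 < i ∧ i < n ∧ 3 ≤ nbrCount H' (p i)
  · obtain ⟨i, hi0, hi, hi3⟩ := hbr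
    obtain ⟨t, rfl⟩ : ∃ t, i = t + 1 := ⟨i - 1, by omega⟩
    obtain ⟨hT, -, hd⟩ := h.exchange hp hx hxy hi
    refine hE.add_le_of_leafSet hT ?_
    have hsub : leafSet ((H' \ edge (p t) (p (t + 1))) ⊔ edge (p n) (p 0)) ⊆
        insert (p t) (leafSet H' \ {p n, p 0}) := by
      intro v hv
      have hv1 : nbrCount _ v = 1 := hv
      have := hd v
      by_cases hvt : v = p t
      · exact Or.inl hvt
      refine Or.inr ?_
      by_cases hvt' : v = p (t + 1)
      · subst hvt'
        rw [if_pos (Or.inr rfl)] at this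
        omega
      by_cases hvn : v = p n ∨ v = p 0
      · have : nbrCount H' v = 1 := by rcases hvn with rfl | rfl <;> assumption
        simp_all
      · refine ⟨?_, by simpa using hvn⟩
        simpa [hvt, hvt', hvn, hv1, eq_comm, leafSet] using this
    have h2 : ({p n, p 0} : Set V) ⊆ leafSet H' := by rintro v (rfl | rfl) <;> assumption
    have h3 := Set.ncard_sdiff_add_ncard_of_subset h2 (Set.toFinite _)
    rw [Set.ncard_pair hxy.ne] at h3
    have h4 := Set.ncard_le_ncard hsub (Set.toFinite _)
    have h5 := Set.ncard_insert_le (p t) (leafSet H' \ {p n, p 0})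
    omega
  push Not at hbr
  have hall := h.exists_eq_of_nbrCount_le_two hp hn hy hx
    (fun i hi hi' => by have := hbr i hi hi'; omega)
  by_cases hk : 2 ≤ k
  · refine hE.add_le_of_leafSet h (le_trans ?_ hk)
    rw [← Set.ncard_pair hxy.ne]
    refine Set.ncard_le_ncard ?_ (Set.toFinite _)
    intro v hv
    obtain ⟨i, hi, rfl⟩ := hall v (h.mem_of_mem_leafSet hv)
    by_cases hi0 : i = 0
    · simp [hi0]
    by_cases hin : i = n
    · simp [hin]
    have := hp.two_le_nbrCount (i := i) (by omega) (by omega)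
    have hv1 : nbrCount _ (p i) = 1 := hv
    omega
  have hle : H' ⊔ edge (p n) (p 0) ≤ G := sup_le h.le ((edge_le_iff _).2 (Or.inr hxy))
  have hmem : ∀ ⦃a b⦄, (H' ⊔ edge (p n) (p 0)).Adj a b → a ∈ S' := by
    intro a b hab
    rw [sup_adj, edge_adj] at hab
    rcases hab with hab | ⟨⟨rfl, rfl⟩ | ⟨rfl, rfl⟩, -⟩
    · exact h.mem hab
    · exact h.mem_of_mem_leafSet hx
    · exact h.mem_of_mem_leafSet hy
  refine hE.add_le_of_cycle (subgraphOn hle hmem) ⟨connected_subgraphOn hle hmem h.nonempty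
    fun a ha b hb => (h.reachable ha hb).mono le_sup_left, ?_⟩
  by_cases hn1 : n = 1
  · subst hn1
    left
    rw [← Set.ncard_pair hxy.ne]
    refine Set.ncard_le_ncard ?_ (Set.toFinite _)
    intro v hv
    obtain ⟨i, hi, rfl⟩ := hall v hv
    interval_cases i <;> simp
  · right
    intro v hv
    have hnadj : ¬ H'.Adj (p n) (p 0) := by
      intro hadj
      obtain ⟨n, rfl⟩ : ∃ m, n = m + 1 := ⟨n - 1, by omega⟩
      exact hne _ (by omega) _ (by omega) (by omega)
        (eq_of_nbrCount_le_one (le_of_eq hx) hadj (hp.adj n (by omega)).symm)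
    change nbrCount (H' ⊔ edge (p n) (p 0)) v = 2
    rw [nbrCount_sup_edge hxy.ne hnadj]
    obtain ⟨i, hi, rfl⟩ := hall v hv
    have hx1 : nbrCount _ (p n) = 1 := hx
    have hy1 : nbrCount _ (p 0) = 1 := hy
    by_cases hi0 : i = 0
    · simp [hi0, hy1]
    by_cases hin : i = n
    · simp [hin, hx1]
    have := hp.two_le_nbrCount (i := i) (by omega) (by omega)
    have := hbr i (by omega) (by omega)
    rw [if_neg (by simp [hne i hi n le_rfl hin, hne i hi 0 (by omega) hi0])]
    omega

lemma ncard_lt_of_subset_sdiff {A B : Set V} {x : V} (hx : x ∈ B) (h : A ⊆ B \ {x}) :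
    A.ncard < B.ncard := by
  have h1 := Set.ncard_le_ncard h (Set.toFinite _)
  have h2 := Set.ncard_sdiff_singleton_add_one hx (Set.toFinite _)
  omega

lemma ncard_le_of_subset_insert_sdiff {A B : Set V} {x u : V} (hx : x ∈ B)
    (h : A ⊆ insert u (B \ {x})) : A.ncard ≤ B.ncard := by
  have h1 := Set.ncard_le_ncard h (Set.toFinite _)
  have h2 := Set.ncard_sdiff_singleton_add_one hx (Set.toFinite _)
  have h3 := Set.ncard_insert_le u (B \ {x})
  omega

lemma IsExtremal.mem_of_adj (hE : IsExtremal G k l H S) {x u : V} (hx : x ∈ leafSet H)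
    (hxu : G.Adj x u) : u ∈ S := by
  by_contra hu
  have hT := hE.tree.sup_edge (hE.tree.mem_of_mem_leafSet hx) hu hxu
  have hnadj : ¬ H.Adj x u := fun h => hu (hE.tree.mem_right h)
  have hsub : leafSet (H ⊔ edge x u) ⊆ insert u (leafSet H \ {x}) := by
    intro v hv
    have hv1 : nbrCount _ v = 1 := hv
    rw [nbrCount_sup_edge hxu.ne hnadj] at hv1
    by_cases hvu : v = u
    · exact Or.inl hvu
    by_cases hvx : v = x
    · subst hvx
      have : nbrCount H v = 1 := hx
      simp [this] at hv1
    · exact Or.inr ⟨show nbrCount H v = 1 by simpa [hvu, hvx] using hv1, hvx⟩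
  have h1 := ncard_le_of_subset_insert_sdiff hx hsub
  rw [hE.ncard_leafSet] at h1
  have h2 := hE.le_of_leafSet hT h1
  rw [Set.ncard_insert_of_notMem hu] at h2
  omega

lemma IsExtremal.not_adj (hE : IsExtremal G k l H S) {x y : V} (hx : x ∈ leafSet H)
    (hy : y ∈ leafSet H) : ¬ G.Adj x y := by
  intro hxy
  have := hE.add_le_of_adj hE.tree hE.ncard_leafSet.le hx hy hxy
  have := hE.one_le_l
  omega

lemma IsExtremal.two_le_nbrCount (hE : IsExtremal G k l H S) {x u : V} (hx : x ∈ leafSet H)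
    (hxu : G.Adj x u) : 2 ≤ nbrCount H u := by
  have hreach := hE.tree.reachable (hE.mem_of_adj hx hxu) (hE.tree.mem_of_mem_leafSet hx)
  obtain ⟨p, hp, hp0, -, -⟩ := exists_isPathSeq_of_reachable hreach
  have h1 := one_le_nbrCount (hp.adj 0 (hreach.pos_dist_of_ne hxu.ne'))
  have h2 : nbrCount H u ≠ 1 := fun hu => hE.not_adj hx hu hxu
  rw [hp0] at h1
  omega

/-- Following the tree path from a neighbour `p 0` of the leaf `p n`, no branch vertex is met within
`l` steps. -/
lemma IsExtremal.nbrCount_le_two (hE : IsExtremal G k l H S) {p : ℕ → V} {n : ℕ}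
    (hp : IsPathSeq H p n) (hx : p n ∈ leafSet H) (hG : G.Adj (p n) (p 0)) :
    ∀ t, 0 < t → t ≤ l → t ≤ n → nbrCount H (p t) ≤ 2 := by
  intro t
  induction t using Nat.strong_induction_on with
  | _ t ih =>
    intro ht0 htl htn
    by_contra! h3
    have hx1 : nbrCount H (p n) = 1 := hx
    have htn' : t ≠ n := by rintro rfl; omega
    obtain ⟨s, rfl⟩ : ∃ s, t = s + 1 := ⟨t - 1, by omega⟩
    obtain ⟨H', S', hT, hc, hn, h0, hz, hs, ho⟩ := hE.tree.exists_exchange_prune hp hx hG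
      (show s + 1 < n by omega) (fun i hi his => le_antisymm
        (ih i (by omega) hi (by omega) (by omega)) (hp.two_le_nbrCount hi (by omega)))
    have h0' := hE.two_le_nbrCount hx hG
    have hsub : leafSet H' ⊆ leafSet H \ {p n} := by
      intro v hv
      have hv1 : nbrCount H' v = 1 := hv
      have hvn : v ≠ p n := by rintro rfl; omega
      by_cases hvi : ∃ i ≤ s + 1, v = p i
      · obtain ⟨i, hi, rfl⟩ := hvi
        exfalso
        obtain rfl | hi0 := Nat.eq_zero_or_pos i
        · omega
        obtain rfl | his := hi.eq_or_lt
        · omega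
        · have := hz i hi0 (by omega)
          omega
      · push Not at hvi
        exact ⟨(ho v hvi hvn).symm.trans hv1, hvn⟩
    have h1 := ncard_lt_of_subset_sdiff hx hsub
    rw [hE.ncard_leafSet] at h1
    have := hE.add_le_of_leafSet hT (by omega)
    omega

/-- Following the tree path from a neighbour `p 0` of the leaf `p n`, no neighbour of another leaf
is met within `l` steps. -/
lemma IsExtremal.lt_of_adj (hE : IsExtremal G k l H S) {p : ℕ → V} {n : ℕ}
    (hp : IsPathSeq H p n) (hx : p n ∈ leafSet H) (hG : G.Adj (p n) (p 0)) {x : V}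
    (hx' : x ∈ leafSet H) (hne : x ≠ p n) {t : ℕ} (ht0 : 0 < t) (htn : t ≤ n)
    (hxt : G.Adj x (p t)) : l < t := by
  by_contra! htl
  have htn' : t ≠ n := by rintro rfl; exact hE.not_adj hx' hx hxt
  have hle := hE.nbrCount_le_two hp hx hG
  have h2 : ∀ i, 0 < i → i ≤ t → nbrCount H (p i) = 2 := fun i hi hit =>
    le_antisymm (hle i hi (by omega) (by omega)) (hp.two_le_nbrCount hi (by omega))
  obtain ⟨s, rfl⟩ : ∃ s, t = s + 1 := ⟨t - 1, by omega⟩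
  obtain ⟨H', S', hT, hc, hn, h0, hz, hs, ho⟩ := hE.tree.exists_exchange_prune hp hx hG
    (show s + 1 < n by omega) (fun i hi his => h2 i hi (by omega))
  have h0' := hE.two_le_nbrCount hx hG
  have hx1 : nbrCount H x = 1 := hx'
  have hst := h2 (s + 1) (by omega) le_rfl
  have hsub : leafSet H' ⊆ insert (p (s + 1)) (leafSet H \ {p n}) := by
    intro v hv
    have hv1 : nbrCount H' v = 1 := hv
    have hvn : v ≠ p n := by rintro rfl; omega
    by_cases hvi : ∃ i ≤ s + 1, v = p i
    · obtain ⟨i, hi, rfl⟩ := hvi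
      obtain rfl | hi0 := Nat.eq_zero_or_pos i
      · omega
      obtain rfl | his := hi.eq_or_lt
      · exact Or.inl rfl
      · have := hz i hi0 (by omega)
        omega
    · push Not at hvi
      exact Or.inr ⟨(ho v hvi hvn).symm.trans hv1, hvn⟩
  have hxp : ∀ i ≤ s + 1, x ≠ p i := by
    rintro i hi rfl
    obtain rfl | hi0 := Nat.eq_zero_or_pos i
    · omega
    · have := h2 i hi0 hi
      omega
  have h1 := ncard_le_of_subset_insert_sdiff hx hsub
  rw [hE.ncard_leafSet] at h1
  have := hE.add_le_of_adj hT h1 ((ho x hxp hne).trans hx1)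
    (show nbrCount H' (p (s + 1)) = 1 by omega) hxt
  omega

/-- The branch vertices on a path issuing from a leaf are at distance at least `l` from it. -/
lemma IsExtremal.le_of_three_le (hE : IsExtremal G k l H S) {q : ℕ → V} {t : ℕ}
    (hq : IsPathSeq H q t) (hy : q 0 ∈ leafSet H) (h3 : 3 ≤ nbrCount H (q t))
    (h2 : ∀ i, 0 < i → i < t → nbrCount H (q i) ≤ 2) : l ≤ t := by
  have hy1 : nbrCount H (q 0) = 1 := hy
  obtain rfl | ht := Nat.eq_zero_or_pos t
  · omega
  obtain ⟨s, rfl⟩ : ∃ s, t = s + 1 := ⟨t - 1, by omega⟩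
  obtain ⟨H', S', hT, hc, hz, hs, ho⟩ := IsTreeOn.exists_prune s hE.tree hq hy1
    (fun i hi his => le_antisymm (h2 i hi (by omega)) (hq.two_le_nbrCount hi (by omega)))
  have hsub : leafSet H' ⊆ leafSet H \ {q 0} := by
    intro v hv
    have hv1 : nbrCount H' v = 1 := hv
    by_cases hvi : ∃ i ≤ s + 1, v = q i
    · obtain ⟨i, hi, rfl⟩ := hvi
      exfalso
      obtain rfl | his := hi.eq_or_lt
      · omega
      · have := hz i (by omega)
        omega
    · push Not at hvi
      exact ⟨(ho v hvi).symm.trans hv1, hvi 0 (by omega)⟩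
  have h1 := ncard_lt_of_subset_sdiff hy hsub
  rw [hE.ncard_leafSet] at h1
  have := hE.add_le_of_leafSet hT (by omega)
  omega

lemma IsExtremal.exists_branch (hE : IsExtremal G k l H S) (hk : 2 ≤ k) {q : ℕ → V} {n : ℕ}
    (hq : IsPathSeq H q n) (hn : 0 < n) (hy : q 0 ∈ leafSet H) (hz : q n ∈ leafSet H) :
    ∃ t, l ≤ t ∧ t < n ∧ 3 ≤ nbrCount H (q t) ∧ ∀ i < t, nbrCount H (q i) ≤ 2 := by
  classical
  have hex : ∃ t, t < n ∧ 3 ≤ nbrCount H (q t) := by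
    by_contra! hcon
    have hall := hE.tree.exists_eq_of_nbrCount_le_two hq hn hy hz
      (fun i _ hi => by have := hcon i hi; omega)
    have hsub : leafSet H ⊆ {q 0, q n} := by
      intro v hv
      obtain ⟨i, hi, rfl⟩ := hall v (hE.tree.mem_of_mem_leafSet hv)
      by_cases hi0 : i = 0
      · simp [hi0]
      by_cases hin : i = n
      · simp [hin]
      have := hq.two_le_nbrCount (i := i) (by omega) (by omega)
      have hv1 : nbrCount _ (q i) = 1 := hv
      omega
    have h1 := Set.ncard_le_ncard hsub (Set.toFinite _)
    have h2 := Set.ncard_insert_le (q 0) {q n}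
    rw [Set.ncard_singleton] at h2
    rw [hE.ncard_leafSet] at h1
    omega
  have hspec := Nat.find_spec hex
  have hmin : ∀ i < Nat.find hex, nbrCount H (q i) ≤ 2 := fun i hi => by
    have := Nat.find_min hex hi
    push Not at this
    have := this (by omega)
    omega
  exact ⟨Nat.find hex, hE.le_of_three_le (hq.mono hspec.1.le fun i hi => hq.adj i (by omega)) hy
    hspec.2 fun i _ hi => hmin i hi, hspec.1, hspec.2, hmin⟩

/-- The first `l` vertices of a path issuing from a leaf have no other leaf as a neighbour. -/
lemma IsExtremal.not_adj_of_lt (hE : IsExtremal G k l H S) {q : ℕ → V} {n : ℕ}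
    (hq : IsPathSeq H q n) (hy : q 0 ∈ leafSet H) {x : V} (hx : x ∈ leafSet H) (hxy : x ≠ q 0)
    {t : ℕ} (htl : t < l) (htn : t < n) (h2 : ∀ i ≤ t, nbrCount H (q i) ≤ 2) :
    ¬ G.Adj x (q t) := by
  intro hxt
  have hy1 : nbrCount H (q 0) = 1 := hy
  have hx1 : nbrCount H x = 1 := hx
  obtain rfl | ht := Nat.eq_zero_or_pos t
  · exact hE.not_adj hx hy hxt
  have h2' : ∀ i, 0 < i → i ≤ t → nbrCount H (q i) = 2 := fun i hi hit =>
    le_antisymm (h2 i hit) (hq.two_le_nbrCount hi (by omega))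
  obtain ⟨s, rfl⟩ : ∃ s, t = s + 1 := ⟨t - 1, by omega⟩
  obtain ⟨H', S', hT, hc, hz, hs, ho⟩ := IsTreeOn.exists_prune s hE.tree
    (hq.mono htn.le fun i hi => hq.adj i (by omega)) hy1 (fun i hi his => h2' i hi (by omega))
  have hst := h2' (s + 1) (by omega) le_rfl
  have hsub : leafSet H' ⊆ insert (q (s + 1)) (leafSet H \ {q 0}) := by
    intro v hv
    have hv1 : nbrCount H' v = 1 := hv
    by_cases hvi : ∃ i ≤ s + 1, v = q i
    · obtain ⟨i, hi, rfl⟩ := hvi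
      obtain rfl | his := hi.eq_or_lt
      · exact Or.inl rfl
      · have := hz i (by omega)
        omega
    · push Not at hvi
      exact Or.inr ⟨(ho v hvi).symm.trans hv1, hvi 0 (by omega)⟩
  have hxq : ∀ i ≤ s + 1, x ≠ q i := by
    rintro i hi rfl
    obtain rfl | hi0 := Nat.eq_zero_or_pos i
    · exact hxy rfl
    · have := h2' i hi0 hi
      omega
  have h1 := ncard_le_of_subset_insert_sdiff hy hsub
  rw [hE.ncard_leafSet] at h1
  have := hE.add_le_of_adj hT h1 ((ho x hxq).trans hx1)
    (show nbrCount H' (q (s + 1)) = 1 by omega) hxt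
  omega

end Extremal

section Collisions

variable [Finite V] {G H : SimpleGraph V} {S : Set V} {k l : ℕ}

lemma IsPathSeq.notMem_leafSet {p : ℕ → V} {n : ℕ} (hp : IsPathSeq H p n) {i : ℕ} (h0 : 0 < i)
    (hi : i < n) : p i ∉ leafSet H := fun h => by
  have h1 : nbrCount H (p i) = 1 := h
  have := hp.two_le_nbrCount h0 hi
  omega

/-- Backward comparison of two paths that traverse a common edge in the same direction. -/
lemma IsPathSeq.sub_eq_sub {p q : ℕ → V} {n n' r t : ℕ} (hp : IsPathSeq H p n)
    (hq : IsPathSeq H q n') (hr : r < n) (ht : t < n') (h0 : p r = q t)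
    (h1 : p (r + 1) = q (t + 1)) {s : ℕ} (hsr : s ≤ r) (hst : s ≤ t)
    (hd : ∀ i, 0 < i → i ≤ r → nbrCount H (p i) ≤ 2) : p (r - s) = q (t - s) := by
  have := (hp.reverse (a := r + 1) (m := s + 1) (by omega) (by omega)).eq_of_nbrCount_le_two
    (hq.reverse (a := t + 1) (m := s + 1) (by omega) (by omega)) (by simpa using h1)
    (by simpa using h0) le_rfl le_rfl (fun i hi his => hd _ (by omega) (by omega)) (s + 1) le_rfl
  simpa using this

/-- Comparison of two paths that traverse a common edge in opposite directions. -/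
lemma IsPathSeq.add_eq_sub {p q : ℕ → V} {n n' r t : ℕ} (hp : IsPathSeq H p n)
    (hq : IsPathSeq H q n') (ht : t < n') (h0 : p r = q (t + 1))
    (h1 : p (r + 1) = q t) {s : ℕ} (hsr : r + 1 + s ≤ n) (hst : s ≤ t)
    (hd : ∀ i, 0 < i → i ≤ t → nbrCount H (q i) ≤ 2) : p (r + 1 + s) = q (t - s) := by
  have := (hq.reverse (a := t + 1) (m := s + 1) (by omega) (by omega)).eq_of_nbrCount_le_two
    (hp.drop (a := r) (m := s + 1) (by omega)) (by simpa using h0.symm)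
    (by simpa using h1.symm) le_rfl le_rfl (fun i hi his => hd _ (by omega) (by omega))
    (s + 1) le_rfl
  rw [show r + 1 + s = r + (s + 1) by omega]
  simpa using this.symm

lemma IsExtremal.edge_ne_of_pendant (hE : IsExtremal G k l H S) {p q : ℕ → V} {n n' r t : ℕ}
    (hp : IsPathSeq H p n) (hx : p n ∈ leafSet H) (hG : G.Adj (p n) (p 0)) (hr : r < n)
    (hq : IsPathSeq H q n') (hy : q 0 ∈ leafSet H) (hxy : p n ≠ q 0) (htl : t < l) (htn : t < n')
    (h2 : ∀ i ≤ t, nbrCount H (q i) ≤ 2) : s(p r, p (r + 1)) ≠ s(q t, q (t + 1)) := by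
  intro he
  rcases Sym2.eq_iff.1 he with ⟨h0, h1⟩ | ⟨h0, h1⟩
  · obtain hrt | hrt := le_or_gt r t
    · have := hq.sub_eq_sub hp htn hr h0.symm h1.symm (s := r) hrt le_rfl (fun i _ hi => h2 i hi)
      rw [Nat.sub_self] at this
      exact hE.not_adj_of_lt hq hy hx hxy (t := t - r) (by omega) (by omega)
        (fun i hi => h2 i (by omega)) (this ▸ hG)
    · have := hq.sub_eq_sub hp htn hr h0.symm h1.symm (s := t) le_rfl hrt.le (fun i _ hi => h2 i hi)
      rw [Nat.sub_self] at this
      exact hp.notMem_leafSet (i := r - t) (by omega) (by omega) (this ▸ hy)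
  · obtain hn | hn := le_or_gt (r + 1 + t) n
    · have := hp.add_eq_sub hq htn h0 h1 (s := t) hn le_rfl (fun i _ hi => h2 i hi)
      rw [Nat.sub_self] at this
      obtain rfl | hlt := hn.eq_or_lt
      · exact hxy this
      · exact hp.notMem_leafSet (i := r + 1 + t) (by omega) hlt (this ▸ hy)
    · have := hp.add_eq_sub hq htn h0 h1 (s := n - (r + 1)) (by omega) (by omega)
        (fun i _ hi => h2 i hi)
      rw [show r + 1 + (n - (r + 1)) = n by omega] at this
      exact hq.notMem_leafSet (by omega) (by omega) (this ▸ hx)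

lemma pendant_edge_ne {p q : ℕ → V} {n n' r t b : ℕ}
    (hp : IsPathSeq H p n) (hx : p 0 ∈ leafSet H) (hrb : r < b) (hb : b < n)
    (hb3 : 3 ≤ nbrCount H (p b)) (hp2 : ∀ i ≤ r, nbrCount H (p i) ≤ 2)
    (hq : IsPathSeq H q n') (hy : q 0 ∈ leafSet H) (ht : t < n')
    (hq2 : ∀ i ≤ t, nbrCount H (q i) ≤ 2) (hxy : p 0 ≠ q 0) :
    s(p r, p (r + 1)) ≠ s(q t, q (t + 1)) := by
  intro he
  rcases Sym2.eq_iff.1 he with ⟨h0, h1⟩ | ⟨h0, h1⟩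
  · obtain hrt | hrt := lt_trichotomy r t
    · have := hp.sub_eq_sub hq (by omega) ht h0 h1 (s := r) le_rfl hrt.le (fun i _ hi => hp2 i hi)
      rw [Nat.sub_self] at this
      exact hq.notMem_leafSet (i := t - r) (by omega) (by omega) (this ▸ hx)
    · have := hp.sub_eq_sub hq (by omega) ht h0 h1 (s := t) (by omega) le_rfl
        (fun i _ hi => hp2 i hi)
      rw [Nat.sub_self] at this
      obtain rfl | hlt : r = t ∨ t < r := by omega
      · rw [Nat.sub_self] at this
        exact hxy this
      · exact hp.notMem_leafSet (i := r - t) (by omega) (by omega) (this ▸ hy)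
  · obtain hbt | hbt := le_or_gt b (r + 1 + t)
    · have := hp.add_eq_sub hq ht h0 h1 (s := b - (r + 1)) (by omega) (by omega)
        (fun i _ hi => hq2 i hi)
      rw [show r + 1 + (b - (r + 1)) = b by omega] at this
      have h2 := hq2 (t - (b - (r + 1))) (by omega)
      rw [← this] at h2
      omega
    · have := hp.add_eq_sub hq ht h0 h1 (s := t) (by omega) le_rfl (fun i _ hi => hq2 i hi)
      rw [Nat.sub_self] at this
      exact hp.notMem_leafSet (i := r + 1 + t) (by omega) (by omega) (this ▸ hy)

end Collisions

section Counting

open scoped Finset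

variable {G H : SimpleGraph V} {S : Set V} {k l : ℕ} {P : V → V → ℕ → V}

/-- `P u x` runs along a shortest path of `H` from `u` to `x`, for all `u, x ∈ S`. -/
def IsGeodesicSystem (H : SimpleGraph V) (S : Set V) (P : V → V → ℕ → V) : Prop :=
  ∀ u ∈ S, ∀ x ∈ S, IsPathSeq H (P u x) (H.dist u x) ∧ P u x 0 = u ∧ P u x (H.dist u x) = x ∧
    ∀ i ≤ H.dist u x, H.dist (P u x i) x = H.dist u x - i

lemma IsTreeOn.exists_isGeodesicSystem (h : IsTreeOn G H S) : ∃ P, IsGeodesicSystem H S P := by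
  classical
  refine ⟨fun u x => if hr : H.Reachable u x then (exists_isPathSeq_of_reachable hr).choose
    else fun _ => u, fun u hu x hx => ?_⟩
  have hr := h.reachable hu hx
  simp only [hr, dif_pos]
  exact (exists_isPathSeq_of_reachable hr).choose_spec

open Classical in
/-- The elements of `C` adjacent to `u` in `G` for which the path from `u` starts as the one to
`x`. -/
noncomputable def sameDirection (G : SimpleGraph V) (P : V → V → ℕ → V) (C : Finset V)
    (u x : V) : Finset V :=
  {z ∈ C | G.Adj z u ∧ P u z 1 = P u x 1}

open Classical in
/-- The rank of `x` in `sameDirection G P C u x` in the order given by `e`. -/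
noncomputable def directionRank (G : SimpleGraph V) (P : V → V → ℕ → V) (C : Finset V)
    (e : V → ℕ) (u x : V) : ℕ :=
  #{z ∈ sameDirection G P C u x | e z < e x}

variable {C : Finset V} {e : V → ℕ} {u u' x x' z : V}

lemma mem_sameDirection : z ∈ sameDirection G P C u x ↔ z ∈ C ∧ G.Adj z u ∧ P u z 1 = P u x 1 := by
  simp [sameDirection]

lemma directionRank_lt (hx : x ∈ C) (hxu : G.Adj x u) :
    directionRank G P C e u x < #(sameDirection G P C u x) := by
  classical
  refine Finset.card_lt_card (Finset.filter_ssubset.2 ⟨x, mem_sameDirection.2 ⟨hx, hxu, rfl⟩, ?_⟩)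
  exact lt_irrefl _

lemma card_sameDirection_le : #(sameDirection G P C u x) ≤ #C := by
  classical
  exact Finset.card_filter_le _ _

lemma exists_mem_sameDirection_of_directionRank_pos (h : 0 < directionRank G P C e u x) :
    ∃ z ∈ sameDirection G P C u x, z ≠ x := by
  classical
  obtain ⟨z, hz⟩ := Finset.card_pos.1 h
  rw [Finset.mem_filter] at hz
  exact ⟨z, hz.1, by rintro rfl; exact lt_irrefl _ hz.2⟩

lemma directionRank_lt_directionRank (hx : x ∈ C) (hxu : G.Adj x u) (hd : P u x 1 = P u x' 1)
    (he : e x < e x') : directionRank G P C e u x < directionRank G P C e u x' := by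
  classical
  have hs : sameDirection G P C u x = sameDirection G P C u x' := by
    ext z; simp [mem_sameDirection, hd]
  refine Finset.card_lt_card (Finset.ssubset_iff_of_subset ?_ |>.2 ⟨x, ?_, ?_⟩)
  · rw [hs]
    exact fun z hz => by
      rw [Finset.mem_filter] at hz ⊢
      exact ⟨hz.1, hz.2.trans he⟩
  · exact Finset.mem_filter.2 ⟨mem_sameDirection.2 ⟨hx, hxu, hd⟩, he⟩
  · simp

lemma directionRank_le (hC : #C ≤ l + 1) (hx : x ∈ C) (hxu : G.Adj x u) :
    directionRank G P C e u x ≤ l := by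
  have h1 := directionRank_lt (P := P) (e := e) hx hxu
  have h2 := card_sameDirection_le (G := G) (P := P) (C := C) (u := u) (x := x)
  omega

variable [Finite V]

/-- The paths from `u` to two adjacent leaves in the same direction agree for more than `l`
steps. -/
lemma IsExtremal.eq_of_same_direction (hE : IsExtremal G k l H S) (hP : IsGeodesicSystem H S P)
    (hx : x ∈ leafSet H) (hz : z ∈ leafSet H) (hxz : x ≠ z) (hxu : G.Adj x u) (hzu : G.Adj z u)
    (h1 : P u x 1 = P u z 1) :
    l < H.dist u x ∧ l < H.dist u z ∧ ∀ i ≤ l + 1, P u x i = P u z i := by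
  have hu := hE.mem_of_adj hx hxu
  obtain ⟨hp, hp0, hpn, -⟩ := hP u hu x (hE.tree.mem_of_mem_leafSet hx)
  obtain ⟨hq, hq0, hqn, -⟩ := hP u hu z (hE.tree.mem_of_mem_leafSet hz)
  have hpos : 0 < H.dist u x :=
    (hE.tree.reachable hu (hE.tree.mem_of_mem_leafSet hx)).pos_dist_of_ne hxu.ne'
  have hpos' : 0 < H.dist u z :=
    (hE.tree.reachable hu (hE.tree.mem_of_mem_leafSet hz)).pos_dist_of_ne hzu.ne'
  have key : ∀ s ≤ l + 1, s ≤ H.dist u x → s ≤ H.dist u z → P u x s = P u z s :=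
    fun s hs hs1 hs2 => hp.eq_of_nbrCount_le_two hq (hp0.trans hq0.symm) h1 hs1 hs2
      (fun i hi his => hE.nbrCount_le_two hp (hpn.symm ▸ hx) (by rwa [hpn, hp0]) i hi
        (by omega) (by omega)) s le_rfl
  have hlx : l < H.dist u x ∧ l < H.dist u z := by
    by_contra hcon
    obtain hlt | heq | hgt := lt_trichotomy (H.dist u x) (H.dist u z)
    · have := key (H.dist u x) (by omega) le_rfl hlt.le
      rw [hpn] at this
      exact hq.notMem_leafSet hpos hlt (this ▸ hx)
    · have := key (H.dist u x) (by omega) le_rfl heq.le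
      rw [hpn, heq, hqn] at this
      exact hxz this
    · have := key (H.dist u z) (by omega) hgt.le le_rfl
      rw [hqn] at this
      exact hp.notMem_leafSet hpos' hgt (this.symm ▸ hz)
  exact ⟨hlx.1, hlx.2, fun i hi => key i hi (by omega) (by omega)⟩

end Counting

section EdgeCount

open scoped Finset

variable [Finite V] {G H : SimpleGraph V} {S : Set V} {k l : ℕ} {P : V → V → ℕ → V}
  {C : Finset V} {e : V → ℕ} {u u' x x' z : V}

lemma IsExtremal.dist_pos (hE : IsExtremal G k l H S) (hx : x ∈ leafSet H) (hxu : G.Adj x u) :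
    0 < H.dist u x :=
  (hE.tree.reachable (hE.mem_of_adj hx hxu) (hE.tree.mem_of_mem_leafSet hx)).pos_dist_of_ne hxu.ne'

lemma IsExtremal.directionRank_lt_dist (hE : IsExtremal G k l H S) (hP : IsGeodesicSystem H S P)
    (hCl : ↑C ⊆ leafSet H) (hC : #C ≤ l + 1) (hx : x ∈ C) (hxu : G.Adj x u) :
    directionRank G P C e u x < H.dist u x := by
  obtain h0 | hpos := Nat.eq_zero_or_pos (directionRank G P C e u x)
  · rw [h0]
    exact hE.dist_pos (hCl hx) hxu
  · obtain ⟨z, hz, hzx⟩ := exists_mem_sameDirection_of_directionRank_pos hpos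
    obtain ⟨hzC, hzu, hz1⟩ := mem_sameDirection.1 hz
    exact (directionRank_le hC hx hxu).trans_lt
      (hE.eq_of_same_direction hP (hCl hx) (hCl hzC) hzx.symm hxu hzu hz1.symm).1

lemma IsExtremal.eq_of_mem_sameDirection (hE : IsExtremal G k l H S)
    (hP : IsGeodesicSystem H S P) (hCl : ↑C ⊆ leafSet H) (hx : x ∈ C) (hxu : G.Adj x u)
    (hz : z ∈ sameDirection G P C u x) {i : ℕ} (hil : i ≤ l) (hi : i < H.dist u x) :
    i < H.dist u z ∧ P u z i = P u x i ∧ P u z (i + 1) = P u x (i + 1) := by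
  obtain ⟨hzC, hzu, hz1⟩ := mem_sameDirection.1 hz
  obtain rfl | hne := eq_or_ne z x
  · exact ⟨hi, rfl, rfl⟩
  · obtain ⟨h1, -, h2⟩ := hE.eq_of_same_direction hP (hCl hzC) (hCl hx) hne hzu hxu hz1
    exact ⟨by omega, h2 i (by omega), h2 (i + 1) (by omega)⟩

/-- If the path from `u` in the direction of `x` traverses the edge from `a` to `b` at a step
`i ≤ l`, then all the leaves in that direction are closer to `b` than to `a`. -/
lemma IsExtremal.dist_eq_add_one (hE : IsExtremal G k l H S)
    (hP : IsGeodesicSystem H S P) (hCl : ↑C ⊆ leafSet H) (hx : x ∈ C) (hxu : G.Adj x u)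
    (hz : z ∈ sameDirection G P C u x) {i : ℕ} (hil : i ≤ l) (hi : i < H.dist u x) :
    H.dist (P u x i) z = H.dist (P u x (i + 1)) z + 1 := by
  obtain ⟨hzi, h0, h1⟩ := hE.eq_of_mem_sameDirection hP hCl hx hxu hz hil hi
  obtain ⟨-, -, -, hd⟩ := hP u (hE.mem_of_adj (hCl hx) hxu) z
    (hE.tree.mem_of_mem_leafSet (hCl (mem_sameDirection.1 hz).1))
  rw [← h0, ← h1, hd i hzi.le, hd (i + 1) hzi]
  omega

/-- The edge of `H` assigned to the edge `x u` of `G`: the one at step `directionRank G P C e u x`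
of the path from `u` to `x`. -/
noncomputable def directionEdge (G : SimpleGraph V) (P : V → V → ℕ → V) (C : Finset V)
    (e : V → ℕ) (u x : V) : Sym2 V :=
  s(P u x (directionRank G P C e u x), P u x (directionRank G P C e u x + 1))

lemma IsExtremal.eq_of_same_orientation (hE : IsExtremal G k l H S)
    (hP : IsGeodesicSystem H S P) (hCl : ↑C ⊆ leafSet H) (hC : #C ≤ l + 1)
    (he : Function.Injective e) (hx : x ∈ C) (hxu : G.Adj x u) (hx' : x' ∈ C) (hxu' : G.Adj x' u')
    (hle : directionRank G P C e u x ≤ directionRank G P C e u' x')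
    (h0 : P u x (directionRank G P C e u x) = P u' x' (directionRank G P C e u' x'))
    (h1 : P u x (directionRank G P C e u x + 1) = P u' x' (directionRank G P C e u' x' + 1)) :
    x = x' ∧ u = u' := by
  have hr := hE.directionRank_lt_dist (e := e) hP hCl hC hx hxu
  have hr' := hE.directionRank_lt_dist (e := e) hP hCl hC hx' hxu'
  have hrl := directionRank_le (P := P) (e := e) hC hx hxu
  have hrl' := directionRank_le (P := P) (e := e) hC hx' hxu'
  have hu' := hE.mem_of_adj (hCl hx') hxu'
  obtain ⟨hp, hp0, hpn, -⟩ := hP u (hE.mem_of_adj (hCl hx) hxu) x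
    (hE.tree.mem_of_mem_leafSet (hCl hx))
  obtain ⟨hq, hq0, hqn, -⟩ := hP u' hu' x' (hE.tree.mem_of_mem_leafSet (hCl hx'))
  have hd := hE.nbrCount_le_two hp (hpn.symm ▸ hCl hx) (by rwa [hpn, hp0])
  have hback : ∀ s ≤ directionRank G P C e u x, P u x (directionRank G P C e u x - s) =
      P u' x' (directionRank G P C e u' x' - s) := fun s hs =>
    hp.sub_eq_sub hq hr hr' h0 h1 hs (hs.trans hle)
      (fun i hi hir => hd i hi (hir.trans hrl) (by omega))
  have hu := hback _ le_rfl
  rw [Nat.sub_self, hp0] at hu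
  obtain heq | hlt := hle.eq_or_lt
  · rw [heq, Nat.sub_self, hq0] at hu
    subst hu
    have hfirst : P u x 1 = P u x' 1 := by
      obtain hz | hpos := Nat.eq_zero_or_pos (directionRank G P C e u x)
      · rw [← heq, hz] at h1
        exact h1
      · have := hback (directionRank G P C e u x - 1) (by omega)
        rwa [← heq, Nat.sub_sub_self hpos] at this
    refine ⟨he ?_, rfl⟩
    by_contra hne
    obtain hlt | hlt := Nat.lt_or_gt_of_ne hne
    · exact (directionRank_lt_directionRank hx hxu hfirst hlt).ne heq
    · exact (directionRank_lt_directionRank hx' hxu' hfirst.symm hlt).ne' heq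
  · exfalso
    obtain hne | rfl := ne_or_eq x x'
    · have := hE.lt_of_adj hq (hqn.symm ▸ hCl hx') (by rwa [hqn, hq0]) (hCl hx) (by rwa [hqn])
        (t := directionRank G P C e u' x' - directionRank G P C e u x) (by omega) (by omega)
        (hu ▸ hxu)
      omega
    · obtain ⟨z, hz, hzx⟩ := exists_mem_sameDirection_of_directionRank_pos (by omega :
        0 < directionRank G P C e u' x)
      obtain ⟨hzC, hzu, -⟩ := mem_sameDirection.1 hz
      obtain ⟨hlt', heq, -⟩ := hE.eq_of_mem_sameDirection hP hCl hx hxu' hz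
        (i := directionRank G P C e u' x - directionRank G P C e u x) (by omega) (by omega)
      obtain ⟨hs, hs0, hsn, -⟩ := hP u' hu' z (hE.tree.mem_of_mem_leafSet (hCl hzC))
      have := hE.lt_of_adj hs (hsn.symm ▸ hCl hzC) (by rwa [hsn, hs0]) (hCl hx)
        (by rw [hsn]; exact hzx.symm)
        (t := directionRank G P C e u' x - directionRank G P C e u x) (by omega) (by omega)
        (by rw [heq, ← hu]; exact hxu)
      omega

lemma IsExtremal.not_opposite_orientation (hE : IsExtremal G k l H S)
    (hP : IsGeodesicSystem H S P) (hCl : ↑C ⊆ leafSet H) (hC : #C ≤ l + 1)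
    (hx : x ∈ C) (hxu : G.Adj x u) (hx' : x' ∈ C) (hxu' : G.Adj x' u')
    (h0 : P u x (directionRank G P C e u x) = P u' x' (directionRank G P C e u' x' + 1))
    (h1 : P u x (directionRank G P C e u x + 1) = P u' x' (directionRank G P C e u' x')) :
    False := by
  classical
  have hr := hE.directionRank_lt_dist (e := e) hP hCl hC hx hxu
  have hr' := hE.directionRank_lt_dist (e := e) hP hCl hC hx' hxu'
  have hrl := directionRank_le (P := P) (e := e) hC hx hxu
  have hrl' := directionRank_le (P := P) (e := e) hC hx' hxu'
  obtain ⟨hp, hp0, hpn, -⟩ := hP u (hE.mem_of_adj (hCl hx) hxu) x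
    (hE.tree.mem_of_mem_leafSet (hCl hx))
  obtain ⟨hq, hq0, hqn, -⟩ := hP u' (hE.mem_of_adj (hCl hx') hxu') x'
    (hE.tree.mem_of_mem_leafSet (hCl hx'))
  have hd := hE.nbrCount_le_two hq (hqn.symm ▸ hCl hx') (by rwa [hqn, hq0])
  have hdisj : Disjoint (sameDirection G P C u x) (sameDirection G P C u' x') := by
    refine Finset.disjoint_left.2 fun z hz hz' => ?_
    have e1 := hE.dist_eq_add_one hP hCl hx hxu hz hrl hr
    have e2 := hE.dist_eq_add_one hP hCl hx' hxu' hz' hrl' hr'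
    rw [h0, h1] at e1
    omega
  have hcard : #(sameDirection G P C u x) + #(sameDirection G P C u' x') ≤ #C := by
    rw [← Finset.card_union_of_disjoint hdisj]
    exact Finset.card_le_card (Finset.union_subset (fun z hz => (mem_sameDirection.1 hz).1)
      fun z hz => (mem_sameDirection.1 hz).1)
  have hlt := directionRank_lt (P := P) (e := e) hx hxu
  have hlt' := directionRank_lt (P := P) (e := e) hx' hxu'
  have hne : x' ≠ x := by
    rintro rfl
    exact Finset.disjoint_left.1 hdisj (mem_sameDirection.2 ⟨hx, hxu, rfl⟩)
      (mem_sameDirection.2 ⟨hx', hxu', rfl⟩)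
  generalize directionRank G P C e u x = r at *
  generalize directionRank G P C e u' x' = r' at *
  have hd' : ∀ i, 0 < i → i ≤ r' → nbrCount H (P u' x' i) ≤ 2 :=
    fun i hi hir => hd i hi (by omega) (by omega)
  obtain hn | hn := le_or_gt (r + 1 + r') (H.dist u x)
  · have := hp.add_eq_sub hq hr' h0 h1 (s := r') hn le_rfl hd'
    rw [Nat.sub_self, hq0] at this
    have := hE.lt_of_adj hp (hpn.symm ▸ hCl hx) (by rwa [hpn, hp0]) (hCl hx') (by rwa [hpn])
      (t := r + 1 + r') (by omega) hn (by rwa [this])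
    omega
  · have := hp.add_eq_sub hq hr' h0 h1 (s := H.dist u x - (r + 1)) (by omega) (by omega) hd'
    rw [show r + 1 + (H.dist u x - (r + 1)) = H.dist u x by omega, hpn] at this
    exact hq.notMem_leafSet (by omega) (by omega) (this ▸ hCl hx)

lemma IsExtremal.eq_of_directionEdge_eq (hE : IsExtremal G k l H S)
    (hP : IsGeodesicSystem H S P) (hCl : ↑C ⊆ leafSet H) (hC : #C ≤ l + 1)
    (he : Function.Injective e) (hx : x ∈ C) (hxu : G.Adj x u) (hx' : x' ∈ C) (hxu' : G.Adj x' u')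
    (h : directionEdge G P C e u x = directionEdge G P C e u' x') : x = x' ∧ u = u' := by
  rcases Sym2.eq_iff.1 h with ⟨h0, h1⟩ | ⟨h0, h1⟩
  · obtain hle | hle := le_total (directionRank G P C e u x) (directionRank G P C e u' x')
    · exact hE.eq_of_same_orientation hP hCl hC he hx hxu hx' hxu' hle h0 h1
    · obtain ⟨h, h'⟩ := hE.eq_of_same_orientation hP hCl hC he hx' hxu' hx hxu hle h0.symm h1.symm
      exact ⟨h.symm, h'.symm⟩
  · exact (hE.not_opposite_orientation hP hCl hC hx hxu hx' hxu' h0 h1).elim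

end EdgeCount

section DegreeSum

open scoped Finset

variable [Fintype V] {G H : SimpleGraph V} [DecidableRel G.Adj] {S : Set V} {k l : ℕ}
  {C : Finset V}

/-- The edges `directionEdge` together with the first `l` edges on the way from each leaf outside
`C` are distinct edges of `H`. -/
lemma IsExtremal.sum_degree_add_le (hE : IsExtremal G k l H S) (hCl : ↑C ⊆ leafSet H) (hC2 : 2 ≤ #C)
    (hC : #C ≤ l + 1) :
    ∑ x ∈ C, G.degree x + l * (k + 1 - #C) + 1 ≤ S.ncard := by
  classical
  obtain ⟨P, hP⟩ := hE.tree.exists_isGeodesicSystem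
  obtain ⟨e, he⟩ : ∃ e : V → ℕ, Function.Injective e :=
    ⟨fun v => Fintype.equivFin V v, fun a b h => (Fintype.equivFin V).injective (Fin.ext h)⟩
  obtain ⟨z, hz⟩ : C.Nonempty := Finset.card_pos.1 (by omega)
  set D : Finset V := (leafSet H).toFinset \ C with hD
  have hDcard : #D = k + 1 - #C := by
    rw [hD, Finset.card_sdiff_of_subset (by simpa [← Finset.coe_subset] using hCl),
      ← Set.ncard_eq_toFinset_card', hE.ncard_leafSet]
  have hDl : ∀ y ∈ D, y ∈ leafSet H ∧ y ∉ C := fun y hy => by simpa [hD] using hy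
  have hpath : ∀ y ∈ D, IsPathSeq H (P y z) (H.dist y z) ∧ P y z 0 = y ∧
      ∃ b, l ≤ b ∧ b < H.dist y z ∧ 3 ≤ nbrCount H (P y z b) ∧
        ∀ i < b, nbrCount H (P y z i) ≤ 2 := fun y hy => by
    have hzS := hE.tree.mem_of_mem_leafSet (hCl hz)
    have hyS := hE.tree.mem_of_mem_leafSet (hDl y hy).1
    obtain ⟨hq, hq0, hqn, -⟩ := hP y hyS z hzS
    have hpos : 0 < #D := Finset.card_pos.2 ⟨y, hy⟩
    exact ⟨hq, hq0, hE.exists_branch (by omega) hq ((hE.tree.reachable hyS hzS).pos_dist_of_ne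
      (by rintro rfl; exact (hDl _ hy).2 hz)) (hq0.symm ▸ (hDl y hy).1) (hqn.symm ▸ hCl hz)⟩
  let φ : (Σ _ : V, V) → Sym2 V := fun a => directionEdge G P C e a.2 a.1
  let ψ : V × ℕ → Sym2 V := fun a => s(P a.1 z a.2, P a.1 z (a.2 + 1))
  have hφ : Set.InjOn φ (C.sigma fun x => G.neighborFinset x) := by
    rintro ⟨x, u⟩ ha ⟨x', u'⟩ ha' h
    simp only [Finset.coe_sigma, Set.mem_sigma_iff, Finset.mem_coe, mem_neighborFinset] at ha ha'
    obtain ⟨rfl, rfl⟩ := hE.eq_of_directionEdge_eq hP hCl hC he ha.1 ha.2 ha'.1 ha'.2 h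
    rfl
  have hψ : Set.InjOn ψ ↑(D ×ˢ Finset.range l) := by
    rintro ⟨y, t⟩ ha ⟨y', t'⟩ ha' h
    simp only [Finset.coe_product, Set.mem_prod, Finset.mem_coe, Finset.mem_range] at ha ha'
    obtain ⟨hq, hq0, b, hlb, hbn, hb3, hb2⟩ := hpath y ha.1
    obtain ⟨hq', hq0', b', hlb', hbn', -, hb2'⟩ := hpath y' ha'.1
    obtain rfl | hne := eq_or_ne y y'
    · exact Prod.ext rfl (hq.eq_of_edge_eq (by omega) (by omega) h)
    · exact (pendant_edge_ne hq (hq0.symm ▸ (hDl y ha.1).1) (by omega) hbn hb3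
        (fun i hi => hb2 i (by omega)) hq' (hq0'.symm ▸ (hDl y' ha'.1).1) (by omega)
        (fun i hi => hb2' i (by omega)) (by rwa [hq0, hq0']) h).elim
  have hdisj : Disjoint ((C.sigma fun x => G.neighborFinset x).image φ)
      ((D ×ˢ Finset.range l).image ψ) := by
    simp only [Finset.disjoint_left, Finset.mem_image, Finset.mem_sigma, mem_neighborFinset,
      Finset.mem_product, Finset.mem_range]
    rintro _ ⟨⟨x, u⟩, ⟨hx, hxu⟩, rfl⟩ ⟨⟨y, t⟩, ⟨hy, ht⟩, h⟩
    obtain ⟨hp, hp0, hpn, -⟩ := hP u (hE.mem_of_adj (hCl hx) hxu) x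
      (hE.tree.mem_of_mem_leafSet (hCl hx))
    obtain ⟨hq, hq0, b, hlb, hbn, -, hb2⟩ := hpath y hy
    exact hE.edge_ne_of_pendant hp (hpn.symm ▸ hCl hx) (by rwa [hpn, hp0])
      (hE.directionRank_lt_dist (e := e) hP hCl hC hx hxu) hq (hq0.symm ▸ (hDl y hy).1)
      (by rw [hpn, hq0]; rintro rfl; exact (hDl _ hy).2 hx) ht (by omega)
      (fun i hi => hb2 i (by omega)) h.symm
  have hsub : (C.sigma fun x => G.neighborFinset x).image φ ∪ (D ×ˢ Finset.range l).image ψ ⊆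
      H.edgeSet.toFinset := by
    simp only [Finset.union_subset_iff, Finset.image_subset_iff, Finset.mem_sigma,
      mem_neighborFinset, Finset.mem_product, Finset.mem_range, Set.mem_toFinset]
    refine ⟨fun ⟨x, u⟩ ⟨hx, hxu⟩ => ?_, fun ⟨y, t⟩ ⟨hy, ht⟩ => ?_⟩
    · exact (hP u (hE.mem_of_adj (hCl hx) hxu) x (hE.tree.mem_of_mem_leafSet (hCl hx))).1.adj _
        (hE.directionRank_lt_dist hP hCl hC hx hxu)
    · obtain ⟨hq, -, b, hlb, hbn, -⟩ := hpath y hy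
      exact hq.adj t (by omega)
  have hcard := Finset.card_le_card hsub
  rw [Finset.card_union_of_disjoint hdisj, Finset.card_image_of_injOn hφ,
    Finset.card_image_of_injOn hψ, Finset.card_sigma, Finset.card_product, Finset.card_range,
    hDcard, ← Set.ncard_eq_toFinset_card', mul_comm] at hcard
  simp only [card_neighborFinset_eq_degree] at hcard
  have := hE.tree.card_edge_lt
  omega

end DegreeSum

section Order

variable {G : SimpleGraph V} {k : ℕ}

lemma endVertexCount_eq_ncard_leafSet {H : SimpleGraph V} [Finite V] (T : G.Subgraph)
    (hT : T.spanningCoe = H) : endVertexCount T = (leafSet H).ncard := by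
  subst hT
  unfold endVertexCount leafSet nbrCount
  congr 1
  ext v
  refine ⟨fun h => h.2, fun h => ⟨?_, h⟩⟩
  obtain ⟨w, hw⟩ : (T.spanningCoe.neighborSet v).Nonempty :=
    (Set.ncard_pos (Set.toFinite _)).1 (one_pos.trans_eq (Eq.symm h))
  exact T.edge_vert hw

lemma bddAbove_ncard_verts [Finite V] (G : SimpleGraph V) (k : ℕ) :
    BddAbove {n | ∃ H : G.Subgraph, IsKEndedTree G k H ∧ H.verts.ncard = n} :=
  ⟨Nat.card V, by rintro _ ⟨H, -, rfl⟩; exact Set.ncard_le_card H.verts⟩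

lemma IsKEndedTree.ncard_verts_le [Finite V] {T : G.Subgraph} (h : IsKEndedTree G k T) :
    T.verts.ncard ≤ maxKEndedOrder G k :=
  le_csSup (bddAbove_ncard_verts G k) ⟨T, h, rfl⟩

lemma exists_ncard_verts_eq_maxKEndedOrder [Finite V] [Nonempty V] (G : SimpleGraph V)
    (hk : 1 ≤ k) : ∃ T : G.Subgraph, IsKEndedTree G k T ∧ T.verts.ncard = maxKEndedOrder G k := by
  obtain ⟨v⟩ := ‹Nonempty V›
  have hv : IsKEndedTree G k (G.singletonSubgraph v) :=
    Or.inr ⟨hk, Subgraph.singletonSubgraph_connected, Or.inl (by simp)⟩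
  have hne : {n | ∃ H : G.Subgraph, IsKEndedTree G k H ∧ H.verts.ncard = n}.Nonempty :=
    ⟨_, _, hv, rfl⟩
  exact Nat.sSup_mem hne (bddAbove_ncard_verts G k)

lemma IsTreeOn.ncard_le_maxKEndedOrder [Finite V] {H : SimpleGraph V} {S : Set V}
    (h : IsTreeOn G H S) (hk : (leafSet H).ncard ≤ k) : S.ncard ≤ maxKEndedOrder G k :=
  IsKEndedTree.ncard_verts_le (T := subgraphOn h.le h.mem)
    (Or.inl ⟨h.isTree_coe, (endVertexCount_eq_ncard_leafSet _ rfl).trans_le hk⟩)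

lemma exists_isExtremal [Finite V] [Nonempty V] {l : ℕ} (hk : 1 ≤ k) (hl : 1 ≤ l)
    (h : maxKEndedOrder G k + l ≤ maxKEndedOrder G (k + 1)) :
    ∃ H S, IsExtremal G k l H S ∧ S.ncard = maxKEndedOrder G (k + 1) := by
  obtain ⟨T, hT, hcard⟩ := exists_ncard_verts_eq_maxKEndedOrder (k := k + 1) G (by omega)
  have hnot : ¬ IsKEndedTree G k T := fun hT' => by
    have := hT'.ncard_verts_le
    omega
  obtain ⟨htree, hleaf⟩ | ⟨-, hcyc⟩ := hT
  · have hcount := endVertexCount_eq_ncard_leafSet T rfl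
    refine ⟨T.spanningCoe, T.verts, ⟨isTreeOn_spanningCoe htree, ?_, hl, ?_, ?_, ?_⟩, hcard⟩
    · have : ¬ endVertexCount T ≤ k := fun hle => hnot (Or.inl ⟨htree, hle⟩)
      omega
    · intro H' S' h' hc
      exact (h'.ncard_le_maxKEndedOrder hc).trans hcard.ge
    · intro H' S' h' hc
      have := h'.ncard_le_maxKEndedOrder hc
      omega
    · intro C hC
      have := IsKEndedTree.ncard_verts_le (k := k) (Or.inr ⟨hk, hC⟩)
      omega
  · exact (hnot (Or.inr ⟨hk, hcyc⟩)).elim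

end Order

/-- **Theorem 2.** If `G` is connected and `k, λ, m` are positive integers with
`2 ≤ m ≤ min{k, λ} + 1`, then either `t_{k+1} ≥ σ_m + λ(k - m + 1) + 1` or
`t_k ≥ t_{k+1} - λ + 1`. -/
theorem theorem2 [Fintype V] (G : SimpleGraph V) [DecidableRel G.Adj]
    (hG : G.Connected) (k l m : ℕ) (hk : 1 ≤ k) (hl : 1 ≤ l)
    (hm : 2 ≤ m) (hmk : m ≤ k + 1) (hml : m ≤ l + 1) :
    minDegreeSum G m + ((l * (k + 1 - m) : ℕ) : ℕ∞) + 1 ≤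
        (maxKEndedOrder G (k + 1) : ℕ∞) ∨
      maxKEndedOrder G k + l ≥ maxKEndedOrder G (k + 1) + 1 := by
  classical
  have := hG.nonempty
  refine or_iff_not_imp_right.2 fun h => ?_
  obtain ⟨H, S, hE, hS⟩ := exists_isExtremal (G := G) hk hl (by omega)
  obtain ⟨C, hCl, rfl⟩ := Finset.exists_subset_card_eq (s := (leafSet H).toFinset) (n := m)
    (by rwa [← Set.ncard_eq_toFinset_card', hE.ncard_leafSet])
  have hCl' : ↑C ⊆ leafSet H := by simpa [← Finset.coe_subset] using hCl
  have hσ : minDegreeSum G C.card ≤ ((∑ x ∈ C, G.degree x : ℕ) : ℕ∞) := by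
    push_cast
    exact iInf₂_le C ⟨rfl, fun u hu v hv => hE.not_adj (hCl' hu) (hCl' hv)⟩
  have hsum := hE.sum_degree_add_le hCl' hm hml
  rw [hS] at hsum
  calc minDegreeSum G C.card + ((l * (k + 1 - C.card) : ℕ) : ℕ∞) + 1
      ≤ ((∑ x ∈ C, G.degree x : ℕ) : ℕ∞) + ((l * (k + 1 - C.card) : ℕ) : ℕ∞) + 1 := by gcongr
    _ ≤ (maxKEndedOrder G (k + 1) : ℕ∞) := by exact_mod_cast hsum
end
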